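/- arXiv:1811.02139 — 3 statements merged into one kernel-verified Lean document; each statement's English description precedes it below -/
import Mathlib

section
/- Let T be a complete first-order theory in a countable language L, U a monster model of T (κ-saturated and strongly κ-homogeneous for a sufficiently large cardinal κ), and φ(x;y) a partitioned L-formula that is NIP. Define f : U^x × U^y → {0,1} by f(a,b) = 1 if U ⊨ φ(a,b) and f(a,b) = 0 otherwise. Then the map Ψ_f : conv(U^x) × conv(U^y) → [0,1] given by Ψ_f(μ,ν) = Σ_{i=1}^n Σ_{j=1}^m r_i s_j f(a_i,b_j), for μ = Σ_{i=1}^n r_i δ_{a_i} and ν = Σ_{j=1}^m s_j δ_{b_j}, is dependent. -/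
/-!
The bound comes from comparing Rademacher averages with a Sauer–Shelah count.

Suppose `Ψ_f` `(r, ε)`-shatters measures `μ_1, …, μ_N`, with witnesses `ν_K` for
`K ⊆ {1, …, N}`. Put `σ_K(i) = -1` for `i ∈ K` and `σ_K(i) = 1` otherwise. Since the signs cancel
over all `K`, subtracting `r + ε / 2` shows `∑_K ∑_i σ_K(i) Ψ_f(μ_i, ν_K) ≥ 2^N N ε / 2`. The left
side is linear in each `ν_K` and, for the other arguments fixed, in each `μ_i`; hence all these
measures can be replaced by suitable points `b_K` and `a_i` without decreasing it
(`exists_points_rademacher`).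

So the traces `{i | φ(a_i; b)}` on the points `a_1, …, a_N` form a family of sets with Rademacher
average at least `ε / 2`. An exponential moment computation (Massart's lemma,
`exp_le_card_of_rademacher`) then forces at least `exp(N ε² / 8)` traces. As `φ` is NIP, the traces
have bounded VC dimension, so by Sauer–Shelah there are only polynomially many in `N`
(`exists_card_traces_le`), which is a contradiction for large `N`.
-/

open FirstOrder Cardinal Set Filter Topology

/-! ### Monster model hypotheses -/

/-- `U` is `κ`-saturated: every set of formulas in finitely many object variables with
parameters from a set of size `< κ` which is finitely satisfiable in `U` is realized in `U`. -/
def IsSaturated (L : FirstOrder.Language.{0, 0}) (U : Type) [L.Structure U]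
    (κ : Cardinal.{0}) : Prop :=
  ∀ (ι : Type), #ι < κ → ∀ (c : ι → U) (n : ℕ) (S : Set (L.Formula (Fin n ⊕ ι))),
    (∀ s : Finset (L.Formula (Fin n ⊕ ι)), ↑s ⊆ S →
      ∃ a : Fin n → U, ∀ ψ ∈ s, ψ.Realize (Sum.elim a c)) →
    ∃ a : Fin n → U, ∀ ψ ∈ S, ψ.Realize (Sum.elim a c)

/-- `U` is strongly `κ`-homogeneous: any two tuples of length `< κ` with the same type
are conjugate under an automorphism of `U`. -/
def IsStronglyHomogeneous (L : FirstOrder.Language.{0, 0}) (U : Type) [L.Structure U]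
    (κ : Cardinal.{0}) : Prop :=
  ∀ (ι : Type), #ι < κ → ∀ a b : ι → U,
    (∀ ψ : L.Formula ι, ψ.Realize a ↔ ψ.Realize b) →
    ∃ σ : U ≃[L] U, ∀ i, σ (a i) = b i

variable {L : FirstOrder.Language.{0, 0}}

/-! ### NIP formulas -/

/-- The partitioned formula `φ(x;y)` has IP in `U`. -/
def FormulaHasIP (U : Type) [L.Structure U] {nx ny : ℕ}
    (φ : L.Formula (Fin nx ⊕ Fin ny)) : Prop :=
  ∀ n : ℕ, ∃ A : Finset (Fin nx → U), n ≤ A.card ∧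
    ∀ K ⊆ A, ∃ bK : Fin ny → U, ∀ c ∈ A, (φ.Realize (Sum.elim c bK) ↔ c ∈ K)

/-- The partitioned formula `φ(x;y)` is NIP in `U`. -/
def FormulaIsNIP (U : Type) [L.Structure U] {nx ny : ℕ}
    (φ : L.Formula (Fin nx ⊕ Fin ny)) : Prop :=
  ¬ FormulaHasIP U φ

/-! ### `φ`-definable sets and local Keisler measures -/

/-- The instance `φ(x;b)` of `φ(x;y)`, as a subset of `U^x`. -/
def phiSet {U : Type} [L.Structure U] {nx ny : ℕ}
    (φ : L.Formula (Fin nx ⊕ Fin ny)) (b : Fin ny → U) : Set (Fin nx → U) :=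
  { a | φ.Realize (Sum.elim a b) }

/-- The Boolean algebra `Def_φ(U)` of subsets of `U^x` generated by the instances
`φ(x;b)`, `b ∈ U^y`. -/
inductive InPhiAlg {U : Type} [L.Structure U] {nx ny : ℕ}
    (φ : L.Formula (Fin nx ⊕ Fin ny)) : Set (Fin nx → U) → Prop
  | basic (b : Fin ny → U) : InPhiAlg φ (phiSet φ b)
  | empty : InPhiAlg φ ∅
  | compl {s : Set (Fin nx → U)} : InPhiAlg φ s → InPhiAlg φ sᶜ
  | union {s t : Set (Fin nx → U)} : InPhiAlg φ s → InPhiAlg φ t → InPhiAlg φ (s ∪ t)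

/-- A finitely additive probability measure on `Def_φ(U)`, i.e. an element of `𝔐_φ(U)`. -/
structure KeislerMeasure (U : Type) [L.Structure U] {nx ny : ℕ}
    (φ : L.Formula (Fin nx ⊕ Fin ny)) where
  toFun : Set (Fin nx → U) → ℝ
  nonneg : ∀ s, InPhiAlg φ s → 0 ≤ toFun s
  total : toFun Set.univ = 1
  additive : ∀ s t, InPhiAlg φ s → InPhiAlg φ t → Disjoint s t →
    toFun (s ∪ t) = toFun s + toFun t

/-! ### Types over `M` and the Stone space `S_y(M)` -/

/-- `b` and `c` have the same type over `M`. -/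
def SameTypeOver {U : Type} [L.Structure U] (M : L.ElementarySubstructure U) {n : ℕ}
    (b c : Fin n → U) : Prop :=
  ∀ (k : ℕ) (ψ : L.Formula (Fin n ⊕ Fin k)) (m : Fin k → M),
    (ψ.Realize (Sum.elim b (fun i => (m i : U))) ↔
      ψ.Realize (Sum.elim c (fun i => (m i : U))))

/-- The setoid of "equality of type over `M`". -/
def typeSetoid {U : Type} [L.Structure U] (M : L.ElementarySubstructure U) (n : ℕ) :
    Setoid (Fin n → U) where
  r := SameTypeOver M
  iseqv := ⟨fun _ _ _ _ => Iff.rfl, fun h k ψ m => (h k ψ m).symm,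
    fun h h' k ψ m => (h k ψ m).trans (h' k ψ m)⟩

/-- The space `S_n(M)` of complete `n`-types over `M` (realized in the monster `U`). -/
def TypeSpace {U : Type} [L.Structure U] (M : L.ElementarySubstructure U) (n : ℕ) : Type :=
  Quotient (typeSetoid M n)

/-- The Stone topology on `S_n(M)`, generated by the sets of types containing a given
formula over `M`. -/
instance typeSpaceTopology {U : Type} [L.Structure U] (M : L.ElementarySubstructure U)
    (n : ℕ) : TopologicalSpace (TypeSpace M n) :=
  TopologicalSpace.generateFrom
    { S | ∃ (k : ℕ) (ψ : L.Formula (Fin n ⊕ Fin k)) (m : Fin k → M),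
        S = { p : TypeSpace M n | ∃ b : Fin n → U,
          Quotient.mk (typeSetoid M n) b = p ∧
            ψ.Realize (Sum.elim b (fun i => (m i : U))) } }

/-- The function `F_a^φ : S_y(M) → ℝ`, the indicator of `φ(a;y) ∈ p` for `a ∈ M^x`. -/
noncomputable def FunF {U : Type} [L.Structure U] {nx ny : ℕ}
    (φ : L.Formula (Fin nx ⊕ Fin ny)) (M : L.ElementarySubstructure U)
    (a : Fin nx → M) (p : TypeSpace M ny) : ℝ :=
  Set.indicator
    { q : TypeSpace M ny | ∃ b : Fin ny → U, Quotient.mk (typeSetoid M ny) b = q ∧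
        φ.Realize (Sum.elim (fun i => (a i : U)) b) } (fun _ => 1) p

/-- The family `𝔽_M^φ = {F_a^φ : a ∈ M^x}` of functions on `S_y(M)`. -/
def FamilyF {U : Type} [L.Structure U] {nx ny : ℕ}
    (φ : L.Formula (Fin nx ⊕ Fin ny)) (M : L.ElementarySubstructure U) :
    Set (TypeSpace M ny → ℝ) :=
  Set.range (fun a : Fin nx → M => FunF φ M a)

/-- The function `F_μ^φ : S_y(M) → ℝ`, `p ↦ μ(φ(x;b))` for `b ⊨ p` (well defined when `μ`
is `φ`-invariant over `M`). -/
noncomputable def FunMu {U : Type} [L.Structure U] {nx ny : ℕ}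
    (φ : L.Formula (Fin nx ⊕ Fin ny)) (M : L.ElementarySubstructure U)
    (μ : KeislerMeasure U φ) (p : TypeSpace M ny) : ℝ :=
  μ.toFun (phiSet φ (Quotient.out p))

/-! ### Properties of local Keisler measures -/

/-- `μ` is `φ`-invariant over `M`. -/
def PhiInvariant {U : Type} [L.Structure U] {nx ny : ℕ}
    (φ : L.Formula (Fin nx ⊕ Fin ny)) (M : L.ElementarySubstructure U)
    (μ : KeislerMeasure U φ) : Prop :=
  ∀ b c : Fin ny → U, SameTypeOver M b c → μ.toFun (phiSet φ b) = μ.toFun (phiSet φ c)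

/-- `μ` is `M`-invariant: automorphisms of `U` fixing `M` pointwise preserve the measure of
every set in `Def_φ(U)`. -/
def MInvariant {U : Type} [L.Structure U] {nx ny : ℕ}
    (φ : L.Formula (Fin nx ⊕ Fin ny)) (M : L.ElementarySubstructure U)
    (μ : KeislerMeasure U φ) : Prop :=
  ∀ σ : U ≃[L] U, (∀ m : M, σ (m : U) = (m : U)) → ∀ s : Set (Fin nx → U), InPhiAlg φ s →
    μ.toFun ((fun a : Fin nx → U => (σ : U → U) ∘ a) '' s) = μ.toFun s

/-- `μ` is `φ`-definable over `M` (Definition 4.3(i)). -/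
def PhiDefinable {U : Type} [L.Structure U] {nx ny : ℕ}
    (φ : L.Formula (Fin nx ⊕ Fin ny)) (M : L.ElementarySubstructure U)
    (μ : KeislerMeasure U φ) : Prop :=
  ∀ ε : ℝ, 0 < ε → ∃ (m k : ℕ) (ψ : Fin m → L.Formula (Fin ny ⊕ Fin k)) (c : Fin k → M),
    (∀ b : Fin ny → U, ∃! i : Fin m, (ψ i).Realize (Sum.elim b (fun j => (c j : U)))) ∧
    ∀ i : Fin m, ∀ e e' : Fin ny → U,
      (ψ i).Realize (Sum.elim e (fun j => (c j : U))) →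
      (ψ i).Realize (Sum.elim e' (fun j => (c j : U))) →
      |μ.toFun (phiSet φ e) - μ.toFun (phiSet φ e')| < ε

/-- `μ` is finitely satisfiable over `M`: every `φ`-formula of positive measure has a
realization in `M`. -/
def FinSat {U : Type} [L.Structure U] {nx ny : ℕ}
    (φ : L.Formula (Fin nx ⊕ Fin ny)) (M : L.ElementarySubstructure U)
    (μ : KeislerMeasure U φ) : Prop :=
  ∀ s : Set (Fin nx → U), InPhiAlg φ s → 0 < μ.toFun s →
    ∃ a : Fin nx → M, (fun i => (a i : U)) ∈ s

/-- `μ` is `φ`-generically stable over `M` (Definition 4.3(iii)). -/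
def PhiGenericallyStable {U : Type} [L.Structure U] {nx ny : ℕ}
    (φ : L.Formula (Fin nx ⊕ Fin ny)) (M : L.ElementarySubstructure U)
    (μ : KeislerMeasure U φ) : Prop :=
  PhiDefinable φ M μ ∧ FinSat φ M μ

/-! ### The algebra `Δ_φ` of partitioned formulas and full generic stability -/

/-- The family `Δ_φ` of Boolean combinations `θ(x; y_1, ..., y_k)` of the formulas
`φ(x;y_i)`, viewed as set-valued maps on tuples of parameters. -/
inductive InDeltaPhi {U : Type} [L.Structure U] {nx ny : ℕ}
    (φ : L.Formula (Fin nx ⊕ Fin ny)) :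
    (k : ℕ) → ((Fin k → Fin ny → U) → Set (Fin nx → U)) → Prop
  | inst (k : ℕ) (j : Fin k) : InDeltaPhi φ k (fun bs => phiSet φ (bs j))
  | empty (k : ℕ) : InDeltaPhi φ k (fun _ => ∅)
  | compl {k : ℕ} {G} : InDeltaPhi φ k G → InDeltaPhi φ k (fun bs => (G bs)ᶜ)
  | union {k : ℕ} {G H} : InDeltaPhi φ k G → InDeltaPhi φ k H →
      InDeltaPhi φ k (fun bs => G bs ∪ H bs)

/-- `μ` is definable over `M` (Definition 4.11): for every `θ(x;ȳ) ∈ Δ_φ` and `ε > 0` there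
is a partition of `U^ȳ` into `M`-definable pieces on which `μ(θ(x;·))` varies less than `ε`. -/
def DefinableOver {U : Type} [L.Structure U] {nx ny : ℕ}
    (φ : L.Formula (Fin nx ⊕ Fin ny)) (M : L.ElementarySubstructure U)
    (μ : KeislerMeasure U φ) : Prop :=
  ∀ (k : ℕ) (G : (Fin k → Fin ny → U) → Set (Fin nx → U)), InDeltaPhi φ k G →
    ∀ ε : ℝ, 0 < ε →
      ∃ (m j : ℕ) (ρ : Fin m → L.Formula ((Fin k × Fin ny) ⊕ Fin j)) (c : Fin j → M),
        (∀ bs : Fin k → Fin ny → U, ∃! i : Fin m,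
          (ρ i).Realize (Sum.elim (fun q => bs q.1 q.2) (fun t => (c t : U)))) ∧
        ∀ i : Fin m, ∀ e e' : Fin k → Fin ny → U,
          (ρ i).Realize (Sum.elim (fun q => e q.1 q.2) (fun t => (c t : U))) →
          (ρ i).Realize (Sum.elim (fun q => e' q.1 q.2) (fun t => (c t : U))) →
          |μ.toFun (G e) - μ.toFun (G e')| < ε

/-- `μ` is generically stable over `M` (Definition 4.11). -/
def GenericallyStable {U : Type} [L.Structure U] {nx ny : ℕ}
    (φ : L.Formula (Fin nx ⊕ Fin ny)) (M : L.ElementarySubstructure U)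
    (μ : KeislerMeasure U φ) : Prop :=
  DefinableOver φ M μ ∧ FinSat φ M μ

/-- The average measure `Av(ā)` of the finite sequence `ā = (a_1, ..., a_n)`. -/
noncomputable def Av {α : Type*} {n : ℕ} (a : Fin n → α) (s : Set α) : ℝ :=
  (∑ i : Fin n, Set.indicator s (fun _ => (1 : ℝ)) (a i)) / n

/-- `μ` is finitely approximable over `M` (Definition 4.12). -/
def FinApprox {U : Type} [L.Structure U] {nx ny : ℕ}
    (φ : L.Formula (Fin nx ⊕ Fin ny)) (M : L.ElementarySubstructure U)
    (μ : KeislerMeasure U φ) : Prop :=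
  ∀ (k : ℕ) (G : (Fin k → Fin ny → U) → Set (Fin nx → U)), InDeltaPhi φ k G →
    ∀ ε : ℝ, 0 < ε → ∃ (n : ℕ), 0 < n ∧ ∃ a : Fin n → (Fin nx → M),
      ∀ bs : Fin k → Fin ny → U,
        |μ.toFun (G bs) - Av (fun i => fun q => ((a i q : U))) (G bs)| < ε

/-! ### Convexity and dependence notions -/

/-- The set of all finite rational convex combinations of elements of `A`. -/
def ratConv {E : Type*} [AddCommMonoid E] [Module ℝ E] (A : Set E) : Set E :=
  { z | ∃ (n : ℕ) (r : Fin n → ℚ) (v : Fin n → E),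
      (∀ i, 0 < r i) ∧ (∑ i, ((r i : ℝ))) = 1 ∧ (∀ i, v i ∈ A) ∧ z = ∑ i, ((r i : ℝ)) • v i }

/-- A two-variable map `g : X × Y → ℝ` is `(r,ε)`-independent if for every `n` there is a
set `A ⊆ X` with `|A| > n` which `g` `(r,ε)`-shatters; `g` is independent if it is
`(r,ε)`-independent for some `r ∈ (0,1)` and `ε > 0`, and dependent otherwise. -/
def MapIndependent {X Y : Type*} (g : X → Y → ℝ) : Prop :=
  ∃ r : ℝ, r ∈ Set.Ioo (0 : ℝ) 1 ∧ ∃ ε : ℝ, 0 < ε ∧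
    ∀ n : ℕ, ∃ A : Finset X, n < A.card ∧
      ∀ K ⊆ A, ∃ b : Y, ∀ a ∈ A, (g a b ≤ r ↔ a ∈ K) ∧ (r + ε ≤ g a b ↔ a ∉ K)

/-- A set `A ⊆ ℝ^Y` is sequentially independent if there are a sequence `(f_n)` of elements
of `A`, a real `r`, and `ε > 0` such that for every `I ⊆ ℕ` there is `b_I ∈ Y` with
`{n : f_n(b_I) ≤ r} = I` and `{n : f_n(b_I) ≥ r + ε} = ℕ ∖ I`. -/
def SeqIndependent {Y : Type*} (A : Set (Y → ℝ)) : Prop :=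
  ∃ f : ℕ → (Y → ℝ), (∀ n, f n ∈ A) ∧ ∃ r ε : ℝ, 0 < ε ∧
    ∀ I : Set ℕ, ∃ b : Y, {n : ℕ | f n b ≤ r} = I ∧ {n : ℕ | r + ε ≤ f n b} = Iᶜ

/-- The set `conv(X)` of finite convex combinations of Dirac measures on a set, encoded as
finitely supported probability assignments. -/
def FinProb (X : Type) : Type :=
  { p : X →₀ ℝ // (∀ x, 0 ≤ p x) ∧ p.sum (fun _ r => r) = 1 }

/-- The map `Ψ_f : conv(U^x) × conv(U^y) → [0,1]`,
`Ψ_f(Σ r_i δ_{a_i}, Σ s_j δ_{b_j}) = Σ_i Σ_j r_i s_j f(a_i, b_j)`, where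
`f(a,b) = 1` if `U ⊨ φ(a,b)` and `0` otherwise. -/
noncomputable def Psi {L : FirstOrder.Language.{0, 0}} {U : Type} [L.Structure U]
    {nx ny : ℕ} (φ : L.Formula (Fin nx ⊕ Fin ny))
    (μ : FinProb (Fin nx → U)) (ν : FinProb (Fin ny → U)) : ℝ :=
  μ.1.sum fun a r => ν.1.sum fun b s =>
    r * s * Set.indicator (phiSet φ b) (fun _ => (1 : ℝ)) a

/-! ### Rademacher sums over a finite family of sets -/

/-- The sign vector in `{1, -1}^ι` coded by `K`: the value is `-1` on `K` and `1` off `K`. -/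
def sgn {ι : Type} [DecidableEq ι] (K : Finset ι) (i : ι) : ℝ := if i ∈ K then -1 else 1

lemma sum_sgn {ι : Type} [Fintype ι] [DecidableEq ι] (i : ι) :
    ∑ K : Finset ι, sgn K i = 0 := by
  -- complementation of `K` flips the sign
  have h : ∑ K : Finset ι, sgn K i = ∑ K : Finset ι, -sgn K i := by
    refine Fintype.sum_equiv (Equiv.mk compl compl compl_compl compl_compl) _ _ fun K => ?_
    by_cases hi : i ∈ K <;> simp [sgn, hi]
  rw [Finset.sum_neg_distrib] at h
  linarith

/-- The exponential moment of a Rademacher sum `∑ ± p i` with `|p i| ≤ 1`: summing over all signs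
factors it into a product of terms `2 * cosh (t * p i)`. -/
lemma sum_exp_sgn_le {ι : Type} [Fintype ι] [DecidableEq ι] (p : ι → ℝ) (hp : ∀ i, p i ^ 2 ≤ 1)
    (t : ℝ) :
    ∑ K : Finset ι, Real.exp (t * ∑ i, sgn K i * p i) ≤
      2 ^ Fintype.card ι * Real.exp (Fintype.card ι * (t ^ 2 / 2)) := by
  have h1 : ∀ K : Finset ι, Real.exp (t * ∑ i, sgn K i * p i) =
      (∏ i ∈ K, Real.exp (-(t * p i))) * ∏ i ∈ Kᶜ, Real.exp (t * p i) := by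
    intro K
    rw [Finset.mul_sum, Real.exp_sum, ← Finset.prod_mul_prod_compl K]
    congr 1
    · refine Finset.prod_congr rfl fun i hi => ?_
      simp [sgn, hi]
    · refine Finset.prod_congr rfl fun i hi => ?_
      simp [sgn, Finset.mem_compl.1 hi]
  simp_rw [h1]
  rw [← Fintype.prod_add]
  have h2 : ∀ i ∈ (Finset.univ : Finset ι), Real.exp (-(t * p i)) + Real.exp (t * p i) ≤
      2 * Real.exp (t ^ 2 / 2) := by
    intro i _
    have h3 := Real.cosh_le_exp_half_sq (t * p i)
    have h4 : Real.exp ((t * p i) ^ 2 / 2) ≤ Real.exp (t ^ 2 / 2) := by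
      apply Real.exp_le_exp.2
      nlinarith [hp i, sq_nonneg t]
    rw [Real.cosh_eq] at h3
    linarith
  refine (Finset.prod_le_prod (fun i _ => by positivity) h2).trans ?_
  rw [Finset.prod_const, mul_pow, ← Real.exp_nat_mul, Finset.card_univ]

/-- Massart's bound: if members of `𝒜`, chosen according to the signs, make the average Rademacher
sum at least `ε / 2` times the number of points, then `𝒜` is exponentially large. -/
lemma exp_le_card_of_rademacher {ι : Type} [Fintype ι] [DecidableEq ι] (𝒜 : Finset (Finset ι))
    (S : Finset ι → Finset ι) (hS : ∀ K, S K ∈ 𝒜) {ε : ℝ} (hε : 0 < ε)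
    (h : 2 ^ Fintype.card ι * (Fintype.card ι * (ε / 2)) ≤
      ∑ K : Finset ι, ∑ i, sgn K i * (if i ∈ S K then 1 else 0)) :
    Real.exp (Fintype.card ι * (ε ^ 2 / 8)) ≤ 𝒜.card := by
  set N : ℝ := ((Fintype.card ι : ℕ) : ℝ) with hN
  set Z : Finset ι → Finset ι → ℝ := fun P K => ∑ i, sgn K i * (if i ∈ P then 1 else 0) with hZ
  set c : ℝ := N * (ε / 2) with hc
  -- the exponent is chosen to optimise `t * c - N * t ^ 2 / 2`
  set t : ℝ := ε / 2 with ht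
  have ht0 : 0 < t := by positivity
  -- lower bound, from the tangent line of `x ↦ exp (t * x)` at `x = c`
  have lower : 2 ^ Fintype.card ι * Real.exp (t * c) ≤ ∑ K, Real.exp (t * Z (S K) K) := by
    have h1 : ∀ K, Real.exp (t * c) * (1 + t * (Z (S K) K - c)) ≤ Real.exp (t * Z (S K) K) := by
      intro K
      have h2 : t * Z (S K) K = t * c + t * (Z (S K) K - c) := by ring
      rw [h2, Real.exp_add]
      have := Real.add_one_le_exp (t * (Z (S K) K - c))
      gcongr
      linarith
    refine le_trans ?_ (Finset.sum_le_sum fun K _ => h1 K)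
    have h3 : ∑ K, Real.exp (t * c) * (1 + t * (Z (S K) K - c)) =
        2 ^ Fintype.card ι * Real.exp (t * c) +
          Real.exp (t * c) * (t * ((∑ K, Z (S K) K) - 2 ^ Fintype.card ι * c)) := by
      rw [← Finset.mul_sum, Finset.sum_add_distrib, ← Finset.mul_sum, Finset.sum_sub_distrib]
      simp
      ring
    rw [h3]
    have h4 : 0 ≤ (∑ K, Z (S K) K) - 2 ^ Fintype.card ι * c := by linarith
    have : 0 ≤ Real.exp (t * c) * (t * ((∑ K, Z (S K) K) - 2 ^ Fintype.card ι * c)) := by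
      positivity
    linarith
  -- upper bound, replacing the chosen member of `𝒜` by the sum over all members
  have upper : ∑ K, Real.exp (t * Z (S K) K) ≤
      𝒜.card * (2 ^ Fintype.card ι * Real.exp (N * (t ^ 2 / 2))) := by
    calc ∑ K, Real.exp (t * Z (S K) K) ≤ ∑ K, ∑ P ∈ 𝒜, Real.exp (t * Z P K) :=
          Finset.sum_le_sum fun K _ =>
            Finset.single_le_sum (f := fun P => Real.exp (t * Z P K))
              (fun P _ => (Real.exp_pos _).le) (hS K)
      _ = ∑ P ∈ 𝒜, ∑ K, Real.exp (t * Z P K) := Finset.sum_comm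
      _ ≤ ∑ _P ∈ 𝒜, 2 ^ Fintype.card ι * Real.exp (N * (t ^ 2 / 2)) :=
          Finset.sum_le_sum fun P _ =>
            sum_exp_sgn_le _ (fun i => by split_ifs <;> norm_num) t
      _ = _ := by simp
  have key : 2 ^ Fintype.card ι * Real.exp (t * c) ≤
      2 ^ Fintype.card ι * (𝒜.card * Real.exp (N * (t ^ 2 / 2))) := by
    linarith
  have key' := le_of_mul_le_mul_left key (by positivity)
  have hsplit : t * c = N * (ε ^ 2 / 8) + N * (t ^ 2 / 2) := by rw [hc, ht]; ring
  rw [hsplit, Real.exp_add] at key'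
  exact le_of_mul_le_mul_right key' (Real.exp_pos _)

/-! ### Finitely supported probability measures -/

/-- The integral of `g` with respect to the finitely supported probability measure `p`. -/
noncomputable def expect {X : Type} (p : FinProb X) (g : X → ℝ) : ℝ :=
  p.1.sum fun x r => r * g x

lemma expect_const {X : Type} (p : FinProb X) (c : ℝ) : expect p (fun _ => c) = c := by
  have h := p.2.2
  unfold expect Finsupp.sum at *
  rw [← Finset.sum_mul, h, one_mul]

lemma exists_expect_le {X : Type} (p : FinProb X) (g : X → ℝ) : ∃ x, expect p g ≤ g x := by
  by_contra! hlt
  have hne : p.1.support.Nonempty := by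
    rw [Finset.nonempty_iff_ne_empty]
    intro h0
    have h := p.2.2
    simp [Finsupp.sum, h0] at h
  have h1 : expect p g < expect p (fun _ => expect p g) :=
    Finset.sum_lt_sum_of_nonempty hne fun x hx =>
      mul_lt_mul_of_pos_left (hlt x)
        (lt_of_le_of_ne (p.2.1 x) (Ne.symm (Finsupp.mem_support_iff.1 hx)))
  rw [expect_const] at h1
  exact lt_irrefl _ h1

lemma sum_mul_expect {X κ : Type} (s : Finset κ) (p : FinProb X) (c : κ → ℝ) (g : κ → X → ℝ) :
    ∑ k ∈ s, c k * expect p (g k) = expect p (fun x => ∑ k ∈ s, c k * g k x) := by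
  simp only [expect, Finsupp.sum, Finset.mul_sum]
  rw [Finset.sum_comm]
  exact Finset.sum_congr rfl fun x _ => Finset.sum_congr rfl fun k _ => by ring

lemma Psi_eq_expect {L : FirstOrder.Language.{0, 0}} {U : Type} [L.Structure U] {nx ny : ℕ}
    (φ : L.Formula (Fin nx ⊕ Fin ny)) (μ : FinProb (Fin nx → U)) (ν : FinProb (Fin ny → U)) :
    Psi φ μ ν =
      expect ν fun b => expect μ fun a => (phiSet φ b).indicator (fun _ => (1 : ℝ)) a := by
  simp only [Psi, expect, Finsupp.sum, Finset.mul_sum]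
  rw [Finset.sum_comm]
  exact Finset.sum_congr rfl fun b _ => Finset.sum_congr rfl fun a _ => by ring

/-- Shattering by measures yields a large average Rademacher sum already at points: for each `K` the
measure `ν K` may be replaced by a point since the sum is linear in it, and then each `μ i` may be
replaced by a point since the sum over all `K` is linear in each `μ i` separately. -/
lemma exists_points_rademacher {L : FirstOrder.Language.{0, 0}} {U : Type} [L.Structure U]
    {nx ny : ℕ} (φ : L.Formula (Fin nx ⊕ Fin ny)) {ι : Type} [Fintype ι] [DecidableEq ι]
    (μ : ι → FinProb (Fin nx → U)) (ν : Finset ι → FinProb (Fin ny → U)) {r ε : ℝ}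
    (hin : ∀ K, ∀ i ∈ K, Psi φ (μ i) (ν K) ≤ r)
    (hout : ∀ K, ∀ i ∉ K, r + ε ≤ Psi φ (μ i) (ν K)) :
    ∃ (a : ι → Fin nx → U) (b : Finset ι → Fin ny → U),
      2 ^ Fintype.card ι * (Fintype.card ι * (ε / 2)) ≤
        ∑ K : Finset ι, ∑ i, sgn K i * (phiSet φ (b K)).indicator (fun _ => (1 : ℝ)) (a i) := by
  have hb : ∀ K : Finset ι, ∃ b : Fin ny → U, ∑ i, sgn K i * Psi φ (μ i) (ν K) ≤
      ∑ i, sgn K i * expect (μ i) ((phiSet φ b).indicator fun _ => (1 : ℝ)) := by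
    intro K
    simp only [Psi_eq_expect]
    rw [sum_mul_expect]
    exact exists_expect_le (ν K) _
  choose b hb using hb
  have ha : ∀ i, ∃ a : Fin nx → U,
      ∑ K : Finset ι, sgn K i * expect (μ i) ((phiSet φ (b K)).indicator fun _ => (1 : ℝ)) ≤
      ∑ K : Finset ι, sgn K i * (phiSet φ (b K)).indicator (fun _ => (1 : ℝ)) a := by
    intro i
    rw [sum_mul_expect]
    exact exists_expect_le (μ i) _
  choose a ha using ha
  refine ⟨a, b, ?_⟩
  -- centring at `r + ε / 2` costs nothing since the signs sum to zero, and makes each term `≥ ε / 2`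
  have h1 : 2 ^ Fintype.card ι * (Fintype.card ι * (ε / 2)) ≤
      ∑ K : Finset ι, ∑ i, sgn K i * (Psi φ (μ i) (ν K) - (r + ε / 2)) := by
    have h2 : ∀ K : Finset ι, ∀ i, ε / 2 ≤ sgn K i * (Psi φ (μ i) (ν K) - (r + ε / 2)) := by
      intro K i
      by_cases hi : i ∈ K
      · have := hin K i hi
        simp only [sgn, hi, if_true]
        linarith
      · have := hout K i hi
        simp only [sgn, hi, if_false]
        linarith
    refine le_trans (le_of_eq ?_)
      (Finset.sum_le_sum fun K _ => Finset.sum_le_sum fun i _ => h2 K i)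
    simp
  have h3 : ∑ K : Finset ι, ∑ i, sgn K i * (Psi φ (μ i) (ν K) - (r + ε / 2)) =
      ∑ K : Finset ι, ∑ i, sgn K i * Psi φ (μ i) (ν K) := by
    simp only [mul_sub, Finset.sum_sub_distrib]
    have h4 : ∑ K : Finset ι, ∑ i, sgn K i * (r + ε / 2) = 0 := by
      rw [Finset.sum_comm]
      simp only [← Finset.sum_mul, sum_sgn]
      simp
    rw [h4, sub_zero]
  calc 2 ^ Fintype.card ι * (Fintype.card ι * (ε / 2))
      ≤ ∑ K : Finset ι, ∑ i, sgn K i * Psi φ (μ i) (ν K) := h1.trans h3.le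
    _ ≤ ∑ K : Finset ι, ∑ i,
          sgn K i * expect (μ i) ((phiSet φ (b K)).indicator fun _ => (1 : ℝ)) :=
        Finset.sum_le_sum fun K _ => hb K
    _ = ∑ i, ∑ K : Finset ι,
          sgn K i * expect (μ i) ((phiSet φ (b K)).indicator fun _ => (1 : ℝ)) := Finset.sum_comm
    _ ≤ ∑ i, ∑ K : Finset ι, sgn K i * (phiSet φ (b K)).indicator (fun _ => (1 : ℝ)) (a i) :=
        Finset.sum_le_sum fun i _ => ha i
    _ = _ := Finset.sum_comm

/-! ### Counting traces of a NIP formula -/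

open Classical in
/-- The traces `{i | φ(a i; b)}`, `b ∈ U^y`, of the instances of `φ` on the points `a i`. The tuple
`a` need not be injective. -/
noncomputable def traces {L : FirstOrder.Language.{0, 0}} {U : Type} [L.Structure U]
    {nx ny : ℕ} (φ : L.Formula (Fin nx ⊕ Fin ny)) {ι : Type} [Fintype ι]
    (a : ι → Fin nx → U) : Finset (Finset ι) :=
  Finset.univ.filter fun S => ∃ b : Fin ny → U, ∀ i, φ.Realize (Sum.elim (a i) b) ↔ i ∈ S

/-- Sauer–Shelah for a NIP formula: the number of traces on a tuple is polynomial in its length. -/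
lemma exists_card_traces_le {L : FirstOrder.Language.{0, 0}} {U : Type} [L.Structure U]
    {nx ny : ℕ} (φ : L.Formula (Fin nx ⊕ Fin ny)) (hNIP : FormulaIsNIP U φ) :
    ∃ d : ℕ, ∀ (ι : Type) [Fintype ι] (a : ι → Fin nx → U),
      (traces φ a).card ≤ d * (Fintype.card ι + 1) ^ d := by
  classical
  unfold FormulaIsNIP FormulaHasIP at hNIP
  push Not at hNIP
  obtain ⟨d, hd⟩ := hNIP
  refine ⟨d, fun ι _ a => ?_⟩
  -- a shattered index set has fewer than `d` elements
  have hsh : ∀ s : Finset ι, (traces φ a).Shatters s → s.card < d := by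
    intro s hs
    have hs' : ∀ t ⊆ s, ∃ b : Fin ny → U, ∀ i ∈ s, φ.Realize (Sum.elim (a i) b) ↔ i ∈ t := by
      intro t ht
      obtain ⟨u, hu, hut⟩ := hs ht
      obtain ⟨b, hb⟩ := (Finset.mem_filter.1 hu).2
      refine ⟨b, fun i hi => ?_⟩
      rw [hb, ← hut]
      simp [hi]
    -- shattering separates indices, so the points are pairwise distinct
    have hinj : Set.InjOn a s := by
      intro i hi j hj hij
      obtain ⟨b, hb⟩ := hs' {i} (by simpa using hi)
      have h1 := (hb i hi).2 (by simp)
      rw [hij] at h1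
      exact (Finset.mem_singleton.1 ((hb j hj).1 h1)).symm
    by_contra! hcard
    obtain ⟨K, -, hK⟩ := hd (s.image a) (by rwa [Finset.card_image_of_injOn hinj])
    obtain ⟨b, hb⟩ := hs' (s.filter fun i => a i ∈ K) (Finset.filter_subset _ _)
    obtain ⟨c, hc, hcK⟩ := hK b
    obtain ⟨i, hi, rfl⟩ := Finset.mem_image.1 hc
    have := hb i hi
    simp only [Finset.mem_filter, hi, true_and] at this
    tauto
  rcases Finset.eq_empty_or_nonempty (traces φ a) with h0 | ⟨u, hu⟩
  · simp [h0]
  have hdpos : 0 < d := by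
    have := hsh ∅ (fun t ht => ⟨u, hu, by simp [Finset.subset_empty.1 ht]⟩)
    simpa using this
  have hvc : (traces φ a).vcDim < d := by
    unfold Finset.vcDim
    exact (Finset.sup_lt_iff hdpos).2 fun s hs => hsh s (Finset.mem_shatterer.1 hs)
  calc (traces φ a).card ≤ ∑ k ∈ Finset.Iic (traces φ a).vcDim, (Fintype.card ι).choose k :=
        (Finset.card_le_card_shatterer _).trans Finset.card_shatterer_le_sum_vcDim
    _ ≤ ∑ k ∈ Finset.range d, (Fintype.card ι).choose k := by
        refine Finset.sum_le_sum_of_subset fun k hk => ?_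
        rw [Finset.mem_Iic] at hk
        exact Finset.mem_range.2 (hk.trans_lt hvc)
    _ ≤ ∑ _k ∈ Finset.range d, (Fintype.card ι + 1) ^ d := by
        refine Finset.sum_le_sum fun k hk => ?_
        calc (Fintype.card ι).choose k ≤ (Fintype.card ι) ^ k := Nat.choose_le_pow _ _
          _ ≤ (Fintype.card ι + 1) ^ k := Nat.pow_le_pow_left (Nat.le_succ _) _
          _ ≤ _ := Nat.pow_le_pow_right (Nat.succ_pos _) (Finset.mem_range.1 hk).le
    _ = _ := by simp

lemma exists_forall_pow_lt_exp (d : ℕ) {c : ℝ} (hc : 0 < c) :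
    ∃ n : ℕ, ∀ N : ℕ, n ≤ N → (d : ℝ) * ((N : ℝ) + 1) ^ d < Real.exp (N * c) := by
  have h1 : Tendsto (fun x : ℝ => (x + 1) ^ d * Real.exp (-c * (x + 1))) atTop (𝓝 0) := by
    have h2 := (isLittleO_pow_exp_pos_mul_atTop d hc).tendsto_div_nhds_zero
    have h3 := h2.comp (tendsto_atTop_add_const_right atTop (1 : ℝ) tendsto_id)
    refine h3.congr fun x => ?_
    simp only [Function.comp, id, neg_mul, Real.exp_neg]
    rw [div_eq_mul_inv]
  have h4 := (h1.const_mul (d : ℝ)).comp tendsto_natCast_atTop_atTop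
  rw [mul_zero] at h4
  have h5 := h4.eventually (gt_mem_nhds (Real.exp_pos (-c)))
  obtain ⟨n, hn⟩ := eventually_atTop.1 h5
  refine ⟨n, fun N hN => ?_⟩
  have h6 := hn N hN
  simp only [Function.comp] at h6
  have h7 : Real.exp (-c) = Real.exp (N * c) * Real.exp (-c * (N + 1)) := by
    rw [← Real.exp_add]; congr 1; ring
  rw [h7, ← mul_assoc] at h6
  exact lt_of_mul_lt_mul_right h6 (Real.exp_pos _).le

/-- **Theorem 3.12.** If `φ(x;y)` is NIP, then the map
`Ψ_f : conv(U^x) × conv(U^y) → [0,1]` is dependent. -/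
theorem stmt_5
    {L : FirstOrder.Language.{0, 0}} (T : L.Theory) (hT : T.IsComplete)
    (hL : L.card ≤ Cardinal.aleph0)
    {U : Type} [L.Structure U] [Nonempty U] (hUT : T.Model U)
    (κ : Cardinal.{0}) (hκ : Cardinal.aleph0 < κ) (hreg : κ.IsRegular)
    (hsat : IsSaturated L U κ) (hhom : IsStronglyHomogeneous L U κ)
    {nx ny : ℕ} (φ : L.Formula (Fin nx ⊕ Fin ny))    (hNIP : FormulaIsNIP U φ) :
    ¬ MapIndependent (Psi (U := U) φ) := by
  classical
  rintro ⟨r, -, ε, hε, hshatter⟩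
  obtain ⟨d, hd⟩ := exists_card_traces_le φ hNIP
  obtain ⟨n, hn⟩ := exists_forall_pow_lt_exp d (c := ε ^ 2 / 8) (by positivity)
  obtain ⟨A, hA, hK⟩ := hshatter n
  -- index the shattered measures by the elements of `A`
  have hν : ∀ K : Finset A, ∃ ν : FinProb (Fin ny → U), ∀ i : A,
      (Psi φ i.1 ν ≤ r ↔ i ∈ K) ∧ (r + ε ≤ Psi φ i.1 ν ↔ i ∉ K) := by
    intro K
    obtain ⟨ν, hν⟩ := hK (K.map (Function.Embedding.subtype _)) (by
      intro x hx
      obtain ⟨y, -, rfl⟩ := Finset.mem_map.1 hx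
      exact y.2)
    refine ⟨ν, fun i => ?_⟩
    have := hν i.1 i.2
    simpa using this
  choose ν hν using hν
  obtain ⟨a, b, hab⟩ := exists_points_rademacher φ (fun i : A => i.1) ν
    (fun K i hi => (hν K i).1.2 hi) (fun K i hi => (hν K i).2.2 hi)
  have hcard := exp_le_card_of_rademacher (traces φ a)
    (fun K => Finset.univ.filter fun i => a i ∈ phiSet φ (b K))
    (fun K => Finset.mem_filter.2 ⟨Finset.mem_univ _, b K, fun i =>
      ⟨fun h => Finset.mem_filter.2 ⟨Finset.mem_univ _, h⟩, fun h => (Finset.mem_filter.1 h).2⟩⟩) hε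
    (by simpa [Set.indicator_apply] using hab)
  have hpoly : ((traces φ a).card : ℝ) ≤ d * ((Fintype.card A : ℝ) + 1) ^ d := by
    exact_mod_cast hd A a
  have hlt := hn (Fintype.card A) (by rw [Fintype.card_coe]; exact hA.le)
  linarith
end

section
/- Let T be a complete first-order theory in a countable language L, U a monster model of T (κ-saturated and strongly κ-homogeneous for a sufficiently large cardinal κ), M an elementary substructure of U with |M| = ℵ_0, and φ(x;y) a partitioned L-formula that is NIP. If μ ∈ 𝔐_φ(U) is φ-generically stable over M, then for every ε > 0 there exists a sequence a_1, ..., a_n of elements of M^x such that for every b ∈ U^y, |μ(φ(x;b)) − Av(ā)(φ(x;b))| < ε. -/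
/-!
The theorem is proved by duality. Suppose that no average over `M` approximates `μ` within `ε`.
Consider the game in which the first player picks `a ∈ M^x`, the second picks a signed instance
`±φ(x;b)`, and the payoff is `±(μ(φ(x;b)) - 1_{φ(a;b)})`. By assumption every mixed strategy of
the first player has an answer paying at least `ε`, so for each finite `A ⊆ M^x` the minimax
principle (here through multiplicative weights, `exists_good_tuple`) gives a mixed strategy of the
second player with payoff bounded below by a positive multiple of `ε` against every `a ∈ A`.

NIP bounds the number of traces of the `φ(a;y)` on a finite tuple of parameters polynomially
(`exists_traces`, via Sauer–Shelah), and a Vapnik–Chervonenkis argument by repeated halving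
(`exists_small_tuple`) replaces this mixed strategy by a uniform one on a tuple `(bᵢ, ±)` whose
length `n` is independent of `A` (`exists_uniform_tuple`).

Letting `A` grow along an ultrafilter and realising the limit type over the countable model `M` by
saturation (`IsSaturated.exists_limit`) yields a single tuple that is good against every
`a ∈ M^x`; definability of `μ` ensures that the values `μ(φ(x;bᵢ))` pass to the limit. The average
payoff of this tuple, as a function of `x`, is a `φ`-simple function of `μ`-integral zero which is
bounded below by a positive constant on `M^x`, and this contradicts finite satisfiability
(`FinSat.not_forall_le_sum_payoff`).
-/

open FirstOrder Cardinal Set Filter Topology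

variable {L : FirstOrder.Language.{0, 0}}

/-! ### Halving and discrepancy -/
/-- Derandomised Chernoff bound: from each pair `(j, true)`, `(j, false)` one can keep a single
point so that, for all of the at most `exp B` functions in the family simultaneously, the kept sum
is not much below half of the full sum. A uniformly random `σ` works on average for the exponential
moment, by `cosh t ≤ exp (t² / 2)`. -/
lemma exists_halving {X : Type*} (A : Finset X) (m : ℕ) (hm : 0 < m)
    (f : X → Fin m → Bool → ℝ) (hf : ∀ a j s, |f a j s| ≤ 1) (B : ℝ)
    (hB : (A.card : ℝ) ≤ Real.exp B) :
    ∃ σ : Fin m → Bool, ∀ a ∈ A,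
      (∑ j, (f a j true + f a j false) / 2) - √m * (B + 1 / 2) ≤ ∑ j, f a j (σ j) := by
  have hm' : (0 : ℝ) < √m := Real.sqrt_pos.2 (by exact_mod_cast hm)
  have hmm : √(m : ℝ) * √m = m := Real.mul_self_sqrt (by positivity)
  set l : ℝ := (√m)⁻¹ with hl
  have hll : l ^ 2 * m = 1 := by
    rw [hl]; field_simp; linarith
  set c : X → Fin m → ℝ := fun a j => (f a j true - f a j false) / 2 with hc
  have hc1 : ∀ a j, c a j ^ 2 ≤ 1 := by
    intro a j
    have h1 := abs_le.1 (hf a j true)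
    have h2 := abs_le.1 (hf a j false)
    simp only [hc]
    rw [sq_le_one_iff_abs_le_one, abs_le]
    constructor <;> linarith [h1.1, h1.2, h2.1, h2.2]
  set τ : Bool → ℝ := fun s => if s then 1 else -1 with hτ
  have hone : ∀ a ∈ A, ∑ σ : Fin m → Bool, Real.exp (∑ j, -(l * (τ (σ j) * c a j)))
      ≤ 2 ^ m * Real.exp (1 / 2) := by
    intro a _
    have h1 : ∑ σ : Fin m → Bool, Real.exp (∑ j, -(l * (τ (σ j) * c a j)))
        = ∏ j, ∑ s : Bool, Real.exp (-(l * (τ s * c a j))) := by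
      rw [Finset.prod_univ_sum, Fintype.piFinset_univ]
      exact Finset.sum_congr rfl fun σ _ => Real.exp_sum _ _
    rw [h1]
    calc ∏ j, ∑ s : Bool, Real.exp (-(l * (τ s * c a j)))
        ≤ ∏ j : Fin m, (2 * Real.exp (l ^ 2 / 2)) := by
          refine Finset.prod_le_prod (fun j _ => by positivity) fun j _ => ?_
          have h2 : ∑ s : Bool, Real.exp (-(l * (τ s * c a j))) = 2 * Real.cosh (l * c a j) := by
            rw [Real.cosh_eq]; simp [hτ]; ring
          rw [h2]
          have h3 := Real.cosh_le_exp_half_sq (l * c a j)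
          have h4 : (l * c a j) ^ 2 / 2 ≤ l ^ 2 / 2 := by
            rw [mul_pow]; nlinarith [hc1 a j, sq_nonneg l]
          have := Real.exp_le_exp.2 h4
          linarith
      _ = 2 ^ m * Real.exp (1 / 2) := by
          rw [Finset.prod_const, mul_pow, ← Real.exp_nat_mul]
          simp only [Finset.card_univ, Fintype.card_fin]
          congr 2
          linarith
  obtain ⟨σ, -, hσ⟩ : ∃ σ ∈ (Finset.univ : Finset (Fin m → Bool)),
      ∑ a ∈ A, Real.exp (∑ j, -(l * (τ (σ j) * c a j))) ≤ A.card * Real.exp (1 / 2) := by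
    refine Finset.exists_le_of_sum_le Finset.univ_nonempty ?_
    rw [Finset.sum_comm]
    refine (Finset.sum_le_sum hone).trans ?_
    simp
    linarith
  refine ⟨σ, fun a ha => ?_⟩
  have h1 : Real.exp (∑ j, -(l * (τ (σ j) * c a j))) ≤ Real.exp (B + 1 / 2) := by
    refine (Finset.single_le_sum (f := fun a => Real.exp (∑ j, -(l * (τ (σ j) * c a j))))
      (fun _ _ => (Real.exp_pos _).le) ha).trans (hσ.trans ?_)
    rw [Real.exp_add]
    gcongr
  have h2 := Real.exp_le_exp.1 h1
  rw [Finset.sum_neg_distrib, ← Finset.mul_sum] at h2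
  have h3 : -(∑ j, τ (σ j) * c a j) ≤ √m * (B + 1 / 2) := by
    have := mul_le_mul_of_nonneg_left h2 hm'.le
    rwa [mul_neg, ← mul_assoc, hl, mul_inv_cancel₀ hm'.ne', one_mul] at this
  have h4 : ∑ j, f a j (σ j) = (∑ j, (f a j true + f a j false) / 2) + ∑ j, τ (σ j) * c a j := by
    rw [← Finset.sum_add_distrib]
    refine Finset.sum_congr rfl fun j _ => ?_
    cases σ j <;> simp [hτ, hc] <;> ring
  linarith

/-- One halving step: a tuple of length `2 ^ (k + 1)` contains one of length `2 ^ k` whose averages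
drop by a small amount, uniformly in `a`. Polynomial growth of the number of traces, expressed
by `hC`, makes the error summable in `k`. -/
lemma exists_half_tuple {X Z : Type*} (h : X → Z → ℝ) (hh : ∀ a z, |h a z| ≤ 1) (C : ℝ)
    (hC : ∀ (k : ℕ) (z : Fin (2 ^ k) → Z), ∃ A : Finset X,
      (A.card : ℝ) ≤ Real.exp (C * (k + 1)) ∧ ∀ a, ∃ a' ∈ A, ∀ i, h a (z i) = h a' (z i))
    (k : ℕ) (z : Fin (2 ^ (k + 1)) → Z) :
    ∃ z' : Fin (2 ^ k) → Z, ∀ a,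
      (∑ i, h a (z i)) / 2 ^ (k + 1) - (C * (k + 2) + 1 / 2) * (√2)⁻¹ ^ k
        ≤ (∑ i, h a (z' i)) / 2 ^ k := by
  obtain ⟨A, hA, hrep⟩ := hC (k + 1) z
  let e : Fin (2 ^ k) × Bool ≃ Fin (2 ^ (k + 1)) :=
    Fintype.equivOfCardEq (by simp [pow_succ])
  obtain ⟨σ, hσ⟩ := exists_halving A (2 ^ k) (by positivity)
    (fun a j s => h a (z (e (j, s)))) (fun _ _ _ => hh _ _) _ hA
  refine ⟨fun j => z (e (j, σ j)), fun a => ?_⟩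
  obtain ⟨a', ha', haa⟩ := hrep a
  simp only [haa]
  have h1 := hσ a' ha'
  have h2 : ∑ i, h a' (z i) = ∑ j, (h a' (z (e (j, true))) + h a' (z (e (j, false)))) := by
    rw [← e.sum_comp, Fintype.sum_prod_type]
    simp
  rw [← Finset.sum_div, ← h2] at h1
  have h3 : √((2 ^ k : ℕ) : ℝ) = √2 ^ k := by
    push_cast
    rw [Real.sqrt_eq_iff_mul_self_eq (by positivity) (by positivity), ← mul_pow]
    simp
  rw [h3] at h1
  have h4 : (2 : ℝ) ^ k = √2 ^ k * √2 ^ k := by rw [← mul_pow]; simp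
  rw [le_div_iff₀ (by positivity)]
  refine le_trans (le_of_eq ?_) h1
  generalize ∑ i, h a' (z i) = S
  rw [sub_mul, pow_succ, inv_pow]
  have h5 : (0:ℝ) < √2 ^ k := by positivity
  push_cast
  rw [h4]
  field_simp
  ring

/-- One-sided form of the Vapnik–Chervonenkis theorem: every tuple of length a power of two can be
replaced by a tuple of a length depending only on `C` and `δ`, with averages dropping by at
most `δ`, uniformly in `a`. -/
lemma exists_small_tuple {X Z : Type*} (h : X → Z → ℝ) (hh : ∀ a z, |h a z| ≤ 1) (C : ℝ)
    (hC0 : 0 ≤ C)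
    (hC : ∀ (k : ℕ) (z : Fin (2 ^ k) → Z), ∃ A : Finset X,
      (A.card : ℝ) ≤ Real.exp (C * (k + 1)) ∧ ∀ a, ∃ a' ∈ A, ∀ i, h a (z i) = h a' (z i))
    (δ : ℝ) (hδ : 0 < δ) :
    ∃ k₀ : ℕ, ∀ K, k₀ ≤ K → ∀ z : Fin (2 ^ K) → Z, ∃ z' : Fin (2 ^ k₀) → Z, ∀ a,
      (∑ i, h a (z i)) / 2 ^ K - δ ≤ (∑ i, h a (z' i)) / 2 ^ k₀ := by
  set err : ℕ → ℝ := fun k => (C * (k + 2) + 1 / 2) * (√2)⁻¹ ^ k with herr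
  have hr : ‖(√2)⁻¹‖ < 1 := by
    rw [norm_inv, Real.norm_of_nonneg (by positivity)]
    exact inv_lt_one_of_one_lt₀ (Real.lt_sqrt_of_sq_lt (by norm_num))
  have hsum : Summable err := by
    have h1 := (summable_pow_mul_geometric_of_norm_lt_one 1 hr).mul_left C
    have h2 := (summable_geometric_of_norm_lt_one hr).mul_left (2 * C + 1 / 2)
    refine (h1.add h2).congr fun k => ?_
    simp only [herr, pow_one]
    ring
  have herr0 : ∀ k, 0 ≤ err k := fun k => by simp only [herr]; positivity
  obtain ⟨k₀, hk₀⟩ : ∃ k₀, ∑' k, err (k + k₀) < δ :=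
    ((tendsto_order.1 (tendsto_sum_nat_add err)).2 δ hδ).exists
  have hfin : ∀ n, ∑ k ∈ Finset.range n, err (k + k₀) ≤ δ := fun n =>
    (((summable_nat_add_iff k₀).2 hsum).sum_le_tsum _ (fun k _ => herr0 _)).trans hk₀.le
  have key : ∀ n, ∀ z : Fin (2 ^ (n + k₀)) → Z, ∃ z' : Fin (2 ^ k₀) → Z, ∀ a,
      (∑ i, h a (z i)) / 2 ^ (n + k₀) - ∑ k ∈ Finset.range n, err (k + k₀)
        ≤ (∑ i, h a (z' i)) / 2 ^ k₀ := by
    intro n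
    induction n with
    | zero => 
      rw [Nat.zero_add]
      exact fun z => ⟨z, fun a => by simp⟩
    | succ n ih =>
      rw [show n + 1 + k₀ = n + k₀ + 1 by omega]
      intro z
      obtain ⟨z₁, hz₁⟩ := exists_half_tuple h hh C hC (n + k₀) z
      obtain ⟨z', hz'⟩ := ih z₁
      refine ⟨z', fun a => ?_⟩
      have h1 := hz₁ a
      have h2 := hz' a
      rw [Finset.sum_range_succ]
      change _ - err (n + k₀) ≤ _ at h1
      linarith
  refine ⟨k₀, fun K hK => ?_⟩
  obtain ⟨n, rfl⟩ := Nat.exists_eq_add_of_le' hK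
  intro z
  obtain ⟨z', hz'⟩ := key n z
  exact ⟨z', fun a => by linarith [hz' a, hfin n]⟩

/-! ### A minimax argument by multiplicative weights -/

/-- If every finite sequence of `a`'s is answered by some `z`, then so is every positive real
weighting of a finite set, at the cost of half of the margin; the weights are approximated by
integer multiplicities. -/
lemma exists_response_of_weights {X Z : Type*} (h : X → Z → ℝ) (hh : ∀ a z, |h a z| ≤ 1)
    (ε : ℝ) (hε : 0 < ε)
    (hresp : ∀ n : ℕ, 0 < n → ∀ a : Fin n → X, ∃ z, ε * n ≤ ∑ i, h (a i) z)
    (A : Finset X) (hA : A.Nonempty) (w : X → ℝ) (hw : ∀ a, 0 < w a) :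
    ∃ z, ε / 2 * ∑ a ∈ A, w a ≤ ∑ a ∈ A, w a * h a z := by
  have hW : 0 < ∑ a ∈ A, w a := Finset.sum_pos (fun a _ => hw a) hA
  obtain ⟨N, hN⟩ := exists_nat_gt (2 * A.card / (ε * ∑ a ∈ A, w a))
  have hNpos : (0 : ℝ) < N := lt_of_le_of_lt (by positivity) hN
  rw [div_lt_iff₀ (by positivity)] at hN
  let c : X → ℕ := fun a => ⌈N * w a⌉₊
  have hc1 : ∀ a, N * w a ≤ c a := fun a => Nat.le_ceil _
  have hc2 : ∀ a, (c a : ℝ) < N * w a + 1 := fun a =>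
    Nat.ceil_lt_add_one (by have := hw a; positivity)
  let n := ∑ a : A, c a
  have hcard : Fintype.card (Fin n) = Fintype.card (Σ a : A, Fin (c a)) := by
    rw [Fintype.card_fin, Fintype.card_sigma]
    simp only [Fintype.card_fin, n]
  let e : Fin n ≃ Σ a : A, Fin (c a) := Fintype.equivOfCardEq hcard
  have hn : N * ∑ a ∈ A, w a ≤ n := by
    simp only [n]
    rw [Finset.sum_coe_sort A c, Finset.mul_sum]
    push_cast
    exact Finset.sum_le_sum fun a _ => hc1 a
  have hn0 : 0 < n := by
    have : (0 : ℝ) < n := lt_of_lt_of_le (by positivity) hn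
    exact_mod_cast this
  obtain ⟨z, hz⟩ := hresp n hn0 fun i => ((e i).1 : X)
  refine ⟨z, ?_⟩
  have h1 : ∑ i, h ((e i).1 : X) z = ∑ a ∈ A, c a * h a z := by
    rw [e.sum_comp (fun p => h (p.1 : X) z), Fintype.sum_sigma]
    simp only [Finset.sum_const, Finset.card_univ, Fintype.card_fin, nsmul_eq_mul]
    exact Finset.sum_coe_sort A (fun a => (c a : ℝ) * h a z)
  have h2 : ∑ a ∈ A, c a * h a z ≤ ∑ a ∈ A, (N * (w a * h a z) + 1) := by
    refine Finset.sum_le_sum fun a _ => ?_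
    have := abs_le.1 (hh a z)
    nlinarith [hc1 a, hc2 a]
  rw [Finset.sum_add_distrib, ← Finset.mul_sum] at h2
  simp only [Finset.sum_const, nsmul_eq_mul, mul_one] at h2
  rw [h1] at hz
  have h3 : ε * (N * ∑ a ∈ A, w a) ≤ ε * n := by gcongr
  have h4 : N * (ε / 2 * ∑ a ∈ A, w a) ≤ N * ∑ a ∈ A, w a * h a z := by nlinarith
  exact le_of_mul_le_mul_left h4 hNpos

/-- Multiplicative weights: answering repeatedly the weights `exp (-η ∑ h)`, with `η = ε / 4`, makes
the exponential potential decay geometrically, so each individual `a ∈ A` ends up with a large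
sum. This replaces the finite minimax theorem. -/
lemma exists_good_tuple {X Z : Type*} (h : X → Z → ℝ) (hh : ∀ a z, |h a z| ≤ 1)
    (ε : ℝ) (hε : 0 < ε) (hε1 : ε ≤ 1) (A : Finset X)
    (hresp : ∀ w : X → ℝ, (∀ a, 0 < w a) → ∃ z, ε * ∑ a ∈ A, w a ≤ ∑ a ∈ A, w a * h a z)
    (N : ℕ) :
    ∃ z : Fin N → Z, ∑ a ∈ A, Real.exp (-(ε / 4 * ∑ i, h a (z i)))
      ≤ A.card * Real.exp (-(3 / 16 * ε ^ 2 * N)) := by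
  induction N with
  | zero => exact ⟨Fin.elim0, by simp⟩
  | succ N ih =>
    obtain ⟨z, hz⟩ := ih
    set w : X → ℝ := fun a => Real.exp (-(ε / 4 * ∑ i, h a (z i))) with hw
    have hw0 : ∀ a, 0 < w a := fun a => Real.exp_pos _
    obtain ⟨y, hy⟩ := hresp w hw0
    refine ⟨Fin.snoc z y, ?_⟩
    have h1 : ∀ a ∈ A, Real.exp (-(ε / 4 * ∑ i, h a ((Fin.snoc z y : Fin (N + 1) → Z) i)))
        ≤ (1 + ε ^ 2 / 16) * w a - ε / 4 * (w a * h a y) := by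
      intro a _
      rw [Fin.sum_univ_castSucc]
      simp only [Fin.snoc_castSucc, Fin.snoc_last]
      rw [mul_add, neg_add, Real.exp_add]
      have h2 := abs_le.1 (hh a y)
      have h3 : |-(ε / 4 * h a y)| ≤ 1 := by
        rw [abs_neg, abs_mul, abs_of_pos (by positivity : 0 < ε / 4)]
        nlinarith [hh a y, abs_nonneg (h a y)]
      have h4 := (abs_le.1 (Real.abs_exp_sub_one_sub_id_le h3)).2
      have h5 : Real.exp (-(ε / 4 * h a y)) ≤ 1 + ε ^ 2 / 16 - ε / 4 * h a y := by
        have : h a y ^ 2 ≤ 1 := (sq_le_one_iff_abs_le_one _).2 (hh a y)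
        nlinarith [sq_nonneg ε]
      have h6 := mul_le_mul_of_nonneg_left h5 (hw0 a).le
      calc _ ≤ _ := h6
        _ = _ := by ring
    refine (Finset.sum_le_sum h1).trans ?_
    rw [Finset.sum_sub_distrib, ← Finset.mul_sum, ← Finset.mul_sum]
    have hS : 0 ≤ ∑ a ∈ A, w a := Finset.sum_nonneg fun a _ => (hw0 a).le
    have h7 : (1 + ε ^ 2 / 16) * ∑ a ∈ A, w a - ε / 4 * ∑ a ∈ A, w a * h a y
        ≤ (1 - 3 / 16 * ε ^ 2) * ∑ a ∈ A, w a := by nlinarith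
    have h8 : 1 - 3 / 16 * ε ^ 2 ≤ Real.exp (-(3 / 16 * ε ^ 2)) := by
      have := Real.add_one_le_exp (-(3 / 16 * ε ^ 2)); linarith
    calc _ ≤ (1 - 3 / 16 * ε ^ 2) * ∑ a ∈ A, w a := h7
      _ ≤ Real.exp (-(3 / 16 * ε ^ 2)) * (A.card * Real.exp (-(3 / 16 * ε ^ 2 * N))) := by
          gcongr
      _ = _ := by
          rw [mul_left_comm, ← Real.exp_add]
          congr 2
          push_cast; ring

/-- Strategies of the second player can be taken to be uniform on tuples of a fixed length `n`: this
length does not depend on the finite set `A` of moves of the first player. -/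
lemma exists_uniform_tuple {X Z : Type*} (h : X → Z → ℝ) (hh : ∀ a z, |h a z| ≤ 1) (C : ℝ)
    (hC0 : 0 ≤ C)
    (hC : ∀ (k : ℕ) (z : Fin (2 ^ k) → Z), ∃ A : Finset X,
      (A.card : ℝ) ≤ Real.exp (C * (k + 1)) ∧ ∀ a, ∃ a' ∈ A, ∀ i, h a (z i) = h a' (z i))
    (ε : ℝ) (hε : 0 < ε) (hε1 : ε ≤ 1)
    (hresp : ∀ n : ℕ, 0 < n → ∀ a : Fin n → X, ∃ z, ε * n ≤ ∑ i, h (a i) z) :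
    ∃ n : ℕ, 0 < n ∧ ∀ A : Finset X, A.Nonempty → ∃ z : Fin n → Z, ∀ a ∈ A,
      ε / 8 * n ≤ ∑ i, h a (z i) := by
  obtain ⟨k₀, hk₀⟩ := exists_small_tuple h hh C hC0 hC (ε / 8) (by positivity)
  refine ⟨2 ^ k₀, by positivity, fun A hA => ?_⟩
  have hcard : (0 : ℝ) < A.card := by exact_mod_cast hA.card_pos
  obtain ⟨K₁, hK₁⟩ := pow_unbounded_of_one_lt (64 * Real.log A.card / ε ^ 2)
    (one_lt_two : (1 : ℝ) < 2)
  have hKbig : 64 * Real.log A.card / ε ^ 2 ≤ (2 : ℝ) ^ (max k₀ K₁) :=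
    hK₁.le.trans (pow_le_pow_right₀ one_le_two (le_max_right _ _))
  set K := max k₀ K₁
  obtain ⟨z, hz⟩ := exists_good_tuple h hh (ε / 2) (by positivity) (by linarith) A
    (fun w hw => exists_response_of_weights h hh ε hε hresp A hA w hw) (2 ^ K)
  obtain ⟨z', hz'⟩ := hk₀ K (le_max_left _ _) z
  refine ⟨z', fun a ha => ?_⟩
  have h1 := (Finset.single_le_sum
    (f := fun a => Real.exp (-(ε / 2 / 4 * ∑ i, h a (z i))))
    (fun _ _ => (Real.exp_pos _).le) ha).trans hz
  rw [← Real.exp_log hcard, ← Real.exp_add, Real.exp_le_exp] at h1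
  push_cast at h1
  rw [div_le_iff₀ (by positivity)] at hKbig
  have h2 : ε / 4 * 2 ^ K ≤ ∑ i, h a (z i) := by
    have : ε * (ε / 4 * 2 ^ K) ≤ ε * ∑ i, h a (z i) := by nlinarith
    exact le_of_mul_le_mul_left this hε
  have h3 := hz' a
  rw [← le_div_iff₀ (by positivity)] at h2
  have h4 : ε / 8 ≤ (∑ i, h a (z' i)) / 2 ^ k₀ := by linarith
  rw [le_div_iff₀ (by positivity)] at h4
  push_cast
  exact h4

/-! ### Counting traces of a NIP formula -/

/-- If no `d` elements of `X` are shattered by `Y`, then a tuple of length `2 ^ k` in `Y` has at most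
exponentially many in `k` traces of elements of `X`; `A` picks a representative of each trace. Dual
shattering of `2 ^ d` elements of `Y` would shatter `d` elements of `X`, so Sauer–Shelah applies. -/
lemma exists_traces {X Y : Type*} (R : X → Y → Prop) (d : ℕ)
    (hR : ∀ (x : Fin d → X) (y : Finset (Fin d) → Y), ¬ ∀ j K, (R (x j) (y K) ↔ j ∈ K))
    (k : ℕ) (y : Fin (2 ^ k) → Y) :
    ∃ A : Finset X, (A.card : ℝ) ≤ Real.exp (2 * 2 ^ d * (k + 1)) ∧
      ∀ a, ∃ a' ∈ A, ∀ i, R a (y i) ↔ R a' (y i) := by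
  classical
  let tr : X → Finset (Fin (2 ^ k)) := fun a => Finset.univ.filter fun i => R a (y i)
  let 𝒜 : Finset (Finset (Fin (2 ^ k))) := Finset.univ.filter fun t => ∃ a, tr a = t
  have hdim : 𝒜.vcDim ≤ 2 ^ d := by
    refine Finset.sup_le fun S hS => ?_
    rw [Finset.mem_shatterer] at hS
    by_contra! hcard
    obtain ⟨g⟩ : Nonempty (Finset (Fin d) ↪ S) :=
      Function.Embedding.nonempty_of_card_le (by simpa using hcard.le)
    have hx : ∀ j : Fin d, ∃ x : X, ∀ K, (R x (y (g K)) ↔ j ∈ K) := by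
      intro j
      obtain ⟨u, hu, hSu⟩ := hS (t := (Finset.univ.filter fun K => j ∈ K).image
        fun K => (g K : Fin (2 ^ k))) (by
          intro i hi
          obtain ⟨K, -, rfl⟩ := Finset.mem_image.1 hi
          exact (g K).2)
      obtain ⟨x, rfl⟩ := (Finset.mem_filter.1 hu).2
      refine ⟨x, fun K => ?_⟩
      have h1 : R x (y (g K)) ↔ (g K : Fin (2 ^ k)) ∈ S ∩ tr x := by
        simp [tr]
      rw [h1, hSu, Finset.mem_image]
      constructor
      · rintro ⟨K', hK', h2⟩
        rw [← g.injective (Subtype.ext h2)]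
        exact (Finset.mem_filter.1 hK').2
      · exact fun h2 => ⟨K, by simpa using h2, rfl⟩
    choose x hx using hx
    exact hR x (fun K => y (g K)) hx
  have hcard : (𝒜.card : ℝ) ≤ Real.exp (2 * 2 ^ d * (k + 1)) := by
    have h1 := 𝒜.card_le_card_shatterer.trans Finset.card_shatterer_le_sum_vcDim
    have h2 : ∑ j ∈ Finset.Iic 𝒜.vcDim, (Fintype.card (Fin (2 ^ k))).choose j
        ≤ (2 ^ d + 1) * (2 ^ k) ^ (2 ^ d) := by
      calc _ ≤ ∑ j ∈ Finset.Iic 𝒜.vcDim, (2 ^ k) ^ (2 ^ d) := by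
            refine Finset.sum_le_sum fun j hj => ?_
            rw [Fintype.card_fin]
            exact (Nat.choose_le_pow _ _).trans (Nat.pow_le_pow_right (by positivity)
              ((Finset.mem_Iic.1 hj).trans hdim))
        _ ≤ _ := by
            rw [Finset.sum_const, smul_eq_mul, Nat.card_Iic]
            gcongr
    have h3 : (𝒜.card : ℝ) ≤ (2 ^ d + 1) * (2 ^ k) ^ (2 ^ d) := by exact_mod_cast h1.trans h2
    refine h3.trans ?_
    have h4 : (2 : ℝ) ^ d + 1 ≤ Real.exp (2 ^ d) := Real.add_one_le_exp _
    have h5 : (2 : ℝ) ^ k ≤ Real.exp k := by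
      rw [← Real.exp_one_pow]
      gcongr
      have := Real.add_one_le_exp (1 : ℝ); linarith
    calc ((2 : ℝ) ^ d + 1) * (2 ^ k) ^ (2 ^ d)
        ≤ Real.exp (2 ^ d) * (Real.exp k) ^ (2 ^ d) := by gcongr
      _ = Real.exp (2 ^ d * (k + 1)) := by
          rw [← Real.exp_nat_mul, ← Real.exp_add]
          push_cast
          congr 1; ring
      _ ≤ _ := by
          rw [Real.exp_le_exp]
          have : (0 : ℝ) ≤ 2 ^ d * (k + 1) := by positivity
          linarith
  have hch : ∀ t : 𝒜, ∃ a, tr a = t := fun t => (Finset.mem_filter.1 t.2).2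
  choose r hr using hch
  refine ⟨Finset.univ.image r, ?_, fun a => ?_⟩
  · refine le_trans ?_ hcard
    exact_mod_cast Finset.card_image_le.trans (by simp)
  · have ha : tr a ∈ 𝒜 := by simp [𝒜]
    refine ⟨r ⟨tr a, ha⟩, Finset.mem_image_of_mem _ (Finset.mem_univ _), fun i => ?_⟩
    have h1 := congrArg (i ∈ ·) (hr ⟨tr a, ha⟩)
    simp only [tr, Finset.mem_filter, Finset.mem_univ, true_and, eq_iff_iff] at h1
    exact h1.symm

lemma FormulaIsNIP.exists_bound {U : Type} [L.Structure U] {nx ny : ℕ}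
    {φ : L.Formula (Fin nx ⊕ Fin ny)} (hφ : FormulaIsNIP U φ) :
    ∃ d : ℕ, ∀ (x : Fin d → Fin nx → U) (y : Finset (Fin d) → Fin ny → U),
      ¬ ∀ j K, (φ.Realize (Sum.elim (x j) (y K)) ↔ j ∈ K) := by
  classical
  by_contra! hcon
  refine hφ fun n => ?_
  obtain ⟨x, y, hxy⟩ := hcon n
  have hinj : Function.Injective x := by
    intro i j hij
    have h1 := (hxy i {i}).2 (by simp)
    rw [hij, hxy] at h1
    exact (Finset.mem_singleton.1 h1).symm
  refine ⟨Finset.univ.image x, by simp [Finset.card_image_of_injective _ hinj], fun K _ =>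
    ⟨y (Finset.univ.filter fun j => x j ∈ K), fun c hc => ?_⟩⟩
  obtain ⟨j, -, rfl⟩ := Finset.mem_image.1 hc
  rw [hxy]
  simp

/-! ### Local measures, payoffs, and saturation -/

section Measure

variable {U : Type} [L.Structure U] {nx ny : ℕ} {φ : L.Formula (Fin nx ⊕ Fin ny)}

lemma InPhiAlg.univ : InPhiAlg φ (Set.univ : Set (Fin nx → U)) := by
  simpa using (InPhiAlg.empty (U := U) (φ := φ)).compl

lemma InPhiAlg.inter {s t : Set (Fin nx → U)} (hs : InPhiAlg φ s) (ht : InPhiAlg φ t) :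
    InPhiAlg φ (s ∩ t) := by
  rw [← compl_compl (s ∩ t), Set.compl_inter]
  exact (hs.compl.union ht.compl).compl

lemma InPhiAlg.biInter {ι : Type*} (I : Finset ι) (s : ι → Set (Fin nx → U))
    (hs : ∀ i, InPhiAlg φ (s i)) : InPhiAlg φ (⋂ i ∈ I, s i) := by
  classical
  induction I using Finset.induction_on with
  | empty => simpa using InPhiAlg.univ
  | insert i I _ ih =>
    rw [Finset.set_biInter_insert]
    exact (hs i).inter ih

lemma InPhiAlg.biUnion {ι : Type*} (I : Finset ι) (s : ι → Set (Fin nx → U))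
    (hs : ∀ i, InPhiAlg φ (s i)) : InPhiAlg φ (⋃ i ∈ I, s i) := by
  classical
  induction I using Finset.induction_on with
  | empty => simpa using InPhiAlg.empty
  | insert i I _ ih =>
    rw [Finset.set_biUnion_insert]
    exact (hs i).union ih

lemma KeislerMeasure.apply_empty (μ : KeislerMeasure U φ) : μ.toFun ∅ = 0 := by
  have := μ.additive ∅ ∅ .empty .empty (by simp)
  simpa using this

lemma KeislerMeasure.apply_le_one (μ : KeislerMeasure U φ) {s : Set (Fin nx → U)}
    (hs : InPhiAlg φ s) : μ.toFun s ≤ 1 := by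
  have h1 := μ.additive s sᶜ hs hs.compl disjoint_compl_right
  rw [Set.union_compl_self, μ.total] at h1
  linarith [μ.nonneg _ hs.compl]

lemma KeislerMeasure.apply_biUnion (μ : KeislerMeasure U φ) {ι : Type*} (I : Finset ι)
    (s : ι → Set (Fin nx → U)) (hs : ∀ i, InPhiAlg φ (s i))
    (hd : ∀ i j, i ≠ j → Disjoint (s i) (s j)) :
    μ.toFun (⋃ i ∈ I, s i) = ∑ i ∈ I, μ.toFun (s i) := by
  classical
  induction I using Finset.induction_on with
  | empty => simpa using μ.apply_empty
  | insert i I hi ih =>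
    rw [Finset.set_biUnion_insert, Finset.sum_insert hi, ← ih]
    refine μ.additive _ _ (hs i) (.biUnion I s hs) ?_
    simp only [Set.disjoint_iUnion_right]
    exact fun j hj => hd i j fun h => hi (h ▸ hj)

/-- The payoff of `a` against the signed instance `±φ(x;b)`: the signed error made by
approximating `μ(φ(x;b))` by the point mass at `a`. -/
noncomputable def payoff (μ : KeislerMeasure U φ) (M : L.ElementarySubstructure U)
    (a : Fin nx → M) (z : (Fin ny → U) × Bool) : ℝ :=
  (if z.2 then 1 else -1) *
    (μ.toFun (phiSet φ z.1) - (phiSet φ z.1).indicator (fun _ => 1) fun q => (a q : U))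

lemma abs_payoff_le_one (μ : KeislerMeasure U φ) (M : L.ElementarySubstructure U)
    (a : Fin nx → M) (z : (Fin ny → U) × Bool) : |payoff μ M a z| ≤ 1 := by
  have h0 := μ.nonneg _ (InPhiAlg.basic z.1)
  have h1 := μ.apply_le_one (InPhiAlg.basic z.1)
  have h2 : |(if z.2 then 1 else -1 : ℝ)| = 1 := by split_ifs <;> simp
  rw [payoff, abs_mul, h2, one_mul, abs_le]
  by_cases h : (fun q => (a q : U)) ∈ phiSet φ z.1
  · rw [Set.indicator_of_mem h]; constructor <;> linarith
  · rw [Set.indicator_of_notMem h]; constructor <;> linarith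

/-- The total payoff has `μ`-integral zero and is constant on each atom `E K` of the Boolean algebra
generated by the sets `φ(x;bᵢ)`. Atoms of positive measure have points in `M`, so the payoff cannot
be bounded below by a positive constant on `M`. -/
lemma FinSat.not_forall_le_sum_payoff {μ : KeislerMeasure U φ} {M : L.ElementarySubstructure U}
    (hfs : FinSat φ M μ) {n : ℕ} (z : Fin n → (Fin ny → U) × Bool) (δ : ℝ) (hδ : 0 < δ) :
    ¬ ∀ a : Fin nx → M, δ ≤ ∑ i, payoff μ M a (z i) := by
  classical
  intro hall
  set t : Fin n → ℝ := fun i => if (z i).2 then 1 else -1 with ht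
  set P : Fin n → Set (Fin nx → U) := fun i => phiSet φ (z i).1 with hP
  have hPalg : ∀ i, InPhiAlg φ (P i) := fun i => .basic _
  let E : Finset (Fin n) → Set (Fin nx → U) := fun K => {x | ∀ i, x ∈ P i ↔ i ∈ K}
  have hE : ∀ K, InPhiAlg φ (E K) := by
    intro K
    have : E K = ⋂ i ∈ Finset.univ, if i ∈ K then P i else (P i)ᶜ := by
      ext x
      simp only [E, Set.mem_ofPred_eq, Finset.mem_univ, Set.iInter_true, Set.mem_iInter]
      refine forall_congr' fun i => ?_
      by_cases hi : i ∈ K <;> simp [hi]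
    rw [this]
    refine .biInter _ _ fun i => ?_
    split_ifs
    exacts [hPalg i, (hPalg i).compl]
  have hd : ∀ K K', K ≠ K' → Disjoint (E K) (E K') := by
    intro K K' hne
    rw [Set.disjoint_left]
    exact fun x h1 h2 => hne (Finset.ext fun i => (h1 i).symm.trans (h2 i))
  have hmem : ∀ x, x ∈ E (Finset.univ.filter fun i => x ∈ P i) := by simp [E]
  have htot : ∑ K, μ.toFun (E K) = 1 := by
    rw [← μ.apply_biUnion _ E hE hd, ← μ.total]
    congr 1
    refine Set.eq_univ_of_forall fun x => ?_
    simp only [Set.mem_iUnion]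
    exact ⟨_, Finset.mem_univ _, hmem x⟩
  have hPi : ∀ i, μ.toFun (P i) = ∑ K, if i ∈ K then μ.toFun (E K) else 0 := by
    intro i
    rw [← Finset.sum_filter, ← μ.apply_biUnion _ E hE hd]
    congr 1
    ext x
    simp only [Finset.mem_filter, Finset.mem_univ, true_and, Set.mem_iUnion, exists_prop]
    exact ⟨fun h => ⟨_, by simpa using h, hmem x⟩, fun ⟨K, h1, h2⟩ => (h2 i).2 h1⟩
  have hzero : ∑ K, μ.toFun (E K) * ∑ i, t i * (μ.toFun (P i) - if i ∈ K then 1 else 0) = 0 := by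
    simp only [Finset.mul_sum]
    rw [Finset.sum_comm]
    refine Finset.sum_eq_zero fun i _ => ?_
    calc ∑ K, μ.toFun (E K) * (t i * (μ.toFun (P i) - if i ∈ K then 1 else 0))
        = t i * (μ.toFun (P i) * ∑ K, μ.toFun (E K) -
            ∑ K, if i ∈ K then μ.toFun (E K) else 0) := by
          rw [Finset.mul_sum, ← Finset.sum_sub_distrib, Finset.mul_sum]
          refine Finset.sum_congr rfl fun K _ => ?_
          split_ifs <;> ring
      _ = 0 := by rw [htot, ← hPi]; ring
  have hge : ∑ K, μ.toFun (E K) * δ ≤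
      ∑ K, μ.toFun (E K) * ∑ i, t i * (μ.toFun (P i) - if i ∈ K then 1 else 0) := by
    refine Finset.sum_le_sum fun K _ => ?_
    rcases (μ.nonneg _ (hE K)).eq_or_lt with h0 | hpos
    · simp [← h0]
    · obtain ⟨a, ha⟩ := hfs _ (hE K) hpos
      refine mul_le_mul_of_nonneg_left ((hall a).trans (le_of_eq ?_)) hpos.le
      refine Finset.sum_congr rfl fun i _ => ?_
      have hi := ha i
      simp only [payoff, ht, hP, Set.indicator_apply] at hi ⊢
      rw [if_congr hi rfl rfl]
  rw [← Finset.sum_mul, htot, hzero] at hge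
  linarith

/-- Saturation realises ultralimits: a family of finite tuples indexed by `I` has a limit tuple
whose type over `M` is the `F`-limit of their types over `M`. -/
lemma IsSaturated.exists_limit {κ : Cardinal.{0}} (hsat : IsSaturated L U κ)
    (M : L.ElementarySubstructure U) (hM : #M < κ) {n m : ℕ} {I : Type*} (F : Ultrafilter I)
    (b : I → Fin n → Fin m → U) :
    ∃ b' : Fin n → Fin m → U, ∀ (i : Fin n) (k : ℕ) (ψ : L.Formula (Fin m ⊕ Fin k))
      (c : Fin k → M), ψ.Realize (Sum.elim (b' i) fun j => (c j : U)) ↔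
        ∀ᶠ t in F, ψ.Realize (Sum.elim (b t i) fun j => (c j : U)) := by
  classical
  let v : I → Fin (n * m) → U := fun t q =>
    b t (finProdFinEquiv.symm q).1 (finProdFinEquiv.symm q).2
  let S : Set (L.Formula (Fin (n * m) ⊕ M)) :=
    {θ | ∀ᶠ t in F, θ.Realize (Sum.elim (v t) fun x : M => (x : U))}
  obtain ⟨w, hw⟩ := hsat M hM (fun x => (x : U)) (n * m) S (by
    intro s hs
    have h1 : ∀ᶠ t in F, ∀ ψ ∈ s, ψ.Realize (Sum.elim (v t) fun x : M => (x : U)) :=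
      (Filter.eventually_all_finset s).2 fun ψ hψ => hs hψ
    obtain ⟨t, ht⟩ := h1.exists
    exact ⟨v t, ht⟩)
  have hS : ∀ θ : L.Formula (Fin (n * m) ⊕ M), θ.Realize (Sum.elim w fun x : M => (x : U)) ↔
      ∀ᶠ t in F, θ.Realize (Sum.elim (v t) fun x : M => (x : U)) := by
    intro θ
    refine ⟨fun h => ?_, fun h => hw θ h⟩
    by_contra hcon
    have h1 := hw (∼θ) (by
      simpa only [S, Set.mem_ofPred_eq, FirstOrder.Language.Formula.realize_not,
        Ultrafilter.eventually_not] using hcon)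
    rw [FirstOrder.Language.Formula.realize_not] at h1
    exact h1 h
  refine ⟨fun i j => w (finProdFinEquiv (i, j)), fun i k ψ c => ?_⟩
  let g : Fin m ⊕ Fin k → Fin (n * m) ⊕ M :=
    Sum.map (fun j => finProdFinEquiv (i, j)) c
  have h1 := hS (ψ.relabel g)
  simp only [FirstOrder.Language.Formula.realize_relabel] at h1
  have h2 : ∀ u : Fin (n * m) → U, Sum.elim u (fun x : M => (x : U)) ∘ g
      = Sum.elim (fun j => u (finProdFinEquiv (i, j))) fun j => (c j : U) := by
    intro u
    funext q
    rcases q with q | q <;> rfl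
  simp only [h2, v, Equiv.symm_apply_apply] at h1
  exact h1

end Measure

/-! ### The approximation theorem -/

/-- **Theorem 4.9.** Let `φ(x;y)` be NIP and `|M| = ℵ₀`. If `μ ∈ 𝔐_φ(U)` is
`φ`-generically stable over `M`, then for every `ε > 0` there is a sequence `a_1, ..., a_n`
in `M^x` such that `|μ(φ(x;b)) - Av(ā)(φ(x;b))| < ε` for every `b ∈ U^y`. -/
theorem stmt_12
    {L : FirstOrder.Language.{0, 0}} (T : L.Theory) (hT : T.IsComplete)
    (hL : L.card ≤ Cardinal.aleph0)
    {U : Type} [L.Structure U] [Nonempty U] (hUT : T.Model U)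
    (κ : Cardinal.{0}) (hκ : Cardinal.aleph0 < κ) (hreg : κ.IsRegular)
    (hsat : IsSaturated L U κ) (hhom : IsStronglyHomogeneous L U κ)
    (M : L.ElementarySubstructure U) (hM : #M = Cardinal.aleph0)
    {nx ny : ℕ} (φ : L.Formula (Fin nx ⊕ Fin ny))    (hNIP : FormulaIsNIP U φ) (μ : KeislerMeasure U φ)
    (hgs : PhiGenericallyStable φ M μ) :
    ∀ ε : ℝ, 0 < ε → ∃ n : ℕ, 0 < n ∧ ∃ a : Fin n → (Fin nx → M),
      ∀ b : Fin ny → U,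
        |μ.toFun (phiSet φ b) - Av (fun i => fun q => ((a i q : U))) (phiSet φ b)| < ε := by
  classical
  obtain ⟨hdef, hfs⟩ := hgs
  suffices H : ∀ ε : ℝ, 0 < ε → ε ≤ 1 → ∃ n : ℕ, 0 < n ∧ ∃ a : Fin n → (Fin nx → M),
      ∀ b : Fin ny → U,
        |μ.toFun (phiSet φ b) - Av (fun i => fun q => ((a i q : U))) (phiSet φ b)| < ε by
    intro ε hε
    obtain ⟨n, hn, a, ha⟩ := H (min ε 1) (lt_min hε one_pos) (min_le_right _ _)
    exact ⟨n, hn, a, fun b => (ha b).trans_le (min_le_left _ _)⟩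
  intro ε hε hε1
  by_contra! hcon
  have hresp : ∀ n : ℕ, 0 < n → ∀ a : Fin n → Fin nx → M,
      ∃ z, ε * n ≤ ∑ i, payoff μ M (a i) z := by
    intro n hn a
    have hn' : (0 : ℝ) < n := by exact_mod_cast hn
    obtain ⟨b, hb⟩ := hcon n hn a
    have h1 : ∑ i, (μ.toFun (phiSet φ b) - (phiSet φ b).indicator (fun _ => (1 : ℝ))
        fun q => (a i q : U))
        = n * (μ.toFun (phiSet φ b) - Av (fun i => fun q => ((a i q : U))) (phiSet φ b)) := by
      rw [Finset.sum_sub_distrib, Av, mul_sub, mul_div_cancel₀ _ hn'.ne']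
      simp
    rcases le_abs.1 hb with h | h
    · refine ⟨(b, true), ?_⟩
      simp only [payoff, ← Finset.mul_sum, h1]
      simp
      nlinarith
    · refine ⟨(b, false), ?_⟩
      simp only [payoff, ← Finset.mul_sum, h1]
      simp
      nlinarith
  obtain ⟨d, hd⟩ := hNIP.exists_bound
  -- The payoff of `a` on a tuple depends only on the trace of `φ(a;y)`, since the signs and the
  -- values of `μ` are fixed.
  obtain ⟨n, hn, hz⟩ := exists_uniform_tuple (payoff μ M) (abs_payoff_le_one μ M) (2 * 2 ^ d)
    (by positivity) (by
      intro k z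
      obtain ⟨A, hA, hrep⟩ := exists_traces
        (fun (a : Fin nx → M) (y : Fin ny → U) => φ.Realize (Sum.elim (fun q => (a q : U)) y))
        d (fun x y => hd (fun j q => (x j q : U)) y) k (fun i => (z i).1)
      refine ⟨A, hA, fun a => ?_⟩
      obtain ⟨a', ha', h⟩ := hrep a
      refine ⟨a', ha', fun i => ?_⟩
      have hi : (fun q => (a q : U)) ∈ phiSet φ (z i).1 ↔ (fun q => (a' q : U)) ∈ phiSet φ (z i).1 :=
        h i
      simp only [payoff, Set.indicator_apply]
      rw [if_congr hi rfl rfl]) ε hε hε1 hresp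
  have hn' : (0 : ℝ) < n := by exact_mod_cast hn
  have hMne : Nonempty M := Cardinal.mk_ne_zero_iff.1 (by rw [hM]; exact Cardinal.aleph0_ne_zero)
  obtain ⟨m₀⟩ := hMne
  choose z hz using fun A : Finset (Fin nx → M) =>
    hz (insert (fun _ => m₀) A) (Finset.insert_nonempty _ _)
  -- Ultralimit of the tuples `z A` as the finite set `A` grows.
  let F : Ultrafilter (Finset (Fin nx → M)) := Ultrafilter.of atTop
  have hF : (F : Filter (Finset (Fin nx → M))) ≤ atTop := Ultrafilter.of_le _
  obtain ⟨b, hb⟩ := hsat.exists_limit M (hM ▸ hκ) F fun A i => (z A i).1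
  let s : Fin n → Bool := fun i => decide (∀ᶠ A in F, (z A i).2 = true)
  have hs : ∀ i, ∀ᶠ A in F, (z A i).2 = s i := by
    intro i
    by_cases h : ∀ᶠ A in F, (z A i).2 = true
    · simpa only [s, h, decide_true] using h
    · have h1 := Ultrafilter.eventually_not.2 h
      simpa [s, h] using h1
  -- Definability of `μ` makes `b ↦ μ(φ(x;b))` continuous along the ultralimit.
  have hμ : ∀ i, ∀ᶠ A in F,
      |μ.toFun (phiSet φ (z A i).1) - μ.toFun (phiSet φ (b i))| < ε / 16 := by
    intro i
    obtain ⟨m, k, ψ, c, hpart, hosc⟩ := hdef (ε / 16) (by positivity)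
    obtain ⟨l, hl, -⟩ := hpart (b i)
    filter_upwards [(hb i k (ψ l) c).1 hl] with A hA
    exact hosc l _ _ hA hl
  -- The limit is taken in the type of each `bᵢ` over `M`, which contains the formulas `φ(a;y)`.
  have hpat : ∀ (a : Fin nx → M) (i : Fin n), ∀ᶠ A in F,
      ((fun q => (a q : U)) ∈ phiSet φ (z A i).1 ↔ (fun q => (a q : U)) ∈ phiSet φ (b i)) := by
    intro a i
    have h1 := hb i nx (φ.relabel Sum.swap) a
    have h2 : ∀ y : Fin ny → U, (φ.relabel Sum.swap).Realize (Sum.elim y fun j => (a j : U)) ↔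
        (fun q => (a q : U)) ∈ phiSet φ y := by
      intro y
      rw [FirstOrder.Language.Formula.realize_relabel]
      have : (Sum.elim y fun j => (a j : U)) ∘ Sum.swap = Sum.elim (fun q => (a q : U)) y := by
        funext q
        rcases q with q | q <;> rfl
      rw [this]
      rfl
    simp only [h2] at h1
    by_cases h : (fun q => (a q : U)) ∈ phiSet φ (b i)
    · filter_upwards [h1.1 h] with A hA
      exact iff_of_true hA h
    · filter_upwards [Ultrafilter.eventually_not.2 fun h' => h (h1.2 h')] with A hA
      exact iff_of_false hA h
  refine hfs.not_forall_le_sum_payoff (fun i => (b i, s i)) (ε / 16 * n) (by positivity)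
    fun a => ?_
  have hev : ∀ᶠ A in F, a ∈ A ∧ ∀ i, (z A i).2 = s i ∧
      |μ.toFun (phiSet φ (z A i).1) - μ.toFun (phiSet φ (b i))| < ε / 16 ∧
      ((fun q => (a q : U)) ∈ phiSet φ (z A i).1 ↔ (fun q => (a q : U)) ∈ phiSet φ (b i)) := by
    refine Filter.Eventually.and ?_ (Filter.eventually_all.2 fun i =>
      (hs i).and ((hμ i).and (hpat a i)))
    filter_upwards [hF (eventually_ge_atTop {a})] with A hA
    exact hA (Finset.mem_singleton_self a)
  obtain ⟨A, haA, hA⟩ := hev.exists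
  have h1 := hz A a (Finset.mem_insert_of_mem haA)
  have h2 : ∑ i, (payoff μ M a (z A i) - ε / 16) ≤ ∑ i, payoff μ M a (b i, s i) := by
    refine Finset.sum_le_sum fun i _ => ?_
    obtain ⟨hsi, hμi, hpi⟩ := hA i
    have h3 := abs_lt.1 hμi
    simp only [payoff, Set.indicator_apply, hsi]
    rw [if_congr hpi rfl rfl]
    cases s i <;> simp <;> linarith [h3.1, h3.2]
  rw [Finset.sum_sub_distrib] at h2
  simp only [Finset.sum_const, Finset.card_univ, Fintype.card_fin, nsmul_eq_mul] at h2
  linarith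
end

section
/- Let T be a complete first-order theory in a countable language L, U a monster model of T (κ-saturated and strongly κ-homogeneous for a sufficiently large cardinal κ), M an elementary substructure of U with |M| < κ, and φ(x;y) a partitioned L-formula that is NIP. Let μ ∈ 𝔐_φ(U). If μ is generically stable over M, then for every ε > 0 there exists a sequence a_1, ..., a_n in M^x such that for every b ∈ U^y, |μ(φ(x;b)) − Av(ā)(φ(x;b))| < ε. -/
/-!
Write `F(b) = μ(φ(x;b))`. Suppose that no average over points of `M` is within `ε` of `F`.

* Since `φ` is NIP, Sauer–Shelah and the Vapnik–Chervonenkis law (`vc_approx`) turn any finitely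
  supported probability weight on `M^x` into an average, with a small uniform error. Hence no such
  weight is close to `F` either.
* For a finite set `s ⊆ M^x` consider the game with rows `a ∈ s`, columns `(b, ±)` and payoff
  `±(φ(a;b) - F(b))`. By `minimax_alternative` some finitely supported weight on the columns has
  payoff greater than `ε/2` against each `a ∈ s`. The dual family `{φ(a;y)}` has finite
  VC dimension as well (`ShatterBound.dual`), so `vc_approx` replaces this weight by the average
  over `n` columns `(b_j, ±)`, where `n` does not depend on `s`.
* Definability of `μ` partitions `U^y` into finitely many pieces definable over `M` on which `F` is
  almost constant. After fixing the signs and the pieces, the requirements on `(b_1, ..., b_n)` form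
  a family of conditions definable over `M`, one for each `a ∈ M^x`, which is finitely satisfiable.
  By saturation a single tuple `(b_j)` has payoff bounded below by a positive constant against every
  `a ∈ M^x`.
* The function `∑ ±(φ(x;b_j) - F(b_j))` has `μ`-mean zero, so by finite satisfiability it is
  nonpositive at some point of `M^x` (`KeislerMeasure.exists_nonpos`), a contradiction.
-/

open FirstOrder Cardinal Set Filter Topology

variable {L : FirstOrder.Language.{0, 0}}

/-! ### The Vapnik–Chervonenkis law for finitely supported measures -/

/-- Hoeffding's estimate for a Rademacher sum, in unnormalised form: the sum over all sign
patterns of `exp (t ∑ ±c_j)` factors into a product of hyperbolic cosines. -/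
lemma sum_signs_exp {n : ℕ} (c : Fin n → ℝ) (t : ℝ) (hc : ∀ j, |c j| ≤ 2) :
    ∑ σ : Fin n → Bool, Real.exp (t * ∑ j, (bif σ j then -1 else 1) * c j) ≤
      2 ^ n * Real.exp (2 * t ^ 2 * n) := by
  have h1 : ∀ σ : Fin n → Bool, Real.exp (t * ∑ j, (bif σ j then -1 else 1) * c j) =
      ∏ j, Real.exp (t * ((bif σ j then -1 else 1) * c j)) := by
    intro σ
    rw [Finset.mul_sum, Real.exp_sum]
  simp_rw [h1]
  rw [← Fintype.prod_sum (fun j (s : Bool) => Real.exp (t * ((bif s then -1 else 1) * c j)))]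
  calc _ ≤ ∏ _j : Fin n, (2 * Real.exp (2 * t ^ 2)) := by
        refine Finset.prod_le_prod (fun j _ => by positivity) fun j _ => ?_
        have h := Real.cosh_le_exp_half_sq (t * c j)
        have h2 : (t * c j) ^ 2 / 2 ≤ 2 * t ^ 2 := by
          have : c j ^ 2 ≤ 2 ^ 2 := sq_le_sq' (abs_le.1 (hc j)).1 (abs_le.1 (hc j)).2
          nlinarith [sq_nonneg t]
        have h3 := Real.exp_le_exp.2 h2
        rw [Real.cosh_eq] at h
        simp only [Fintype.sum_bool, cond_true, cond_false, one_mul, neg_mul, mul_neg]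
        linarith
    _ = _ := by
        rw [Finset.prod_const, mul_pow, ← Real.exp_nat_mul]
        simp only [Finset.card_univ, Fintype.card_fin]
        ring_nf

lemma sum_weights {X : Type*} [Fintype X] {n : ℕ} (w : X → ℝ) (h1 : ∑ x, w x = 1) :
    ∑ x : Fin n → X, ∏ j, w (x j) = 1 := by
  rw [← Fintype.prod_sum (fun _ (y : X) => w y)]
  simp [h1]

/-- Under the product weight on `X^n`, the `j`-th coordinate has law `w`. -/
lemma sum_weights_marginal {X : Type*} [Fintype X] {n : ℕ} (w : X → ℝ) (h1 : ∑ x, w x = 1)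
    (g : X → ℝ) (j : Fin n) :
    ∑ x : Fin n → X, (∏ k, w (x k)) * g (x j) = ∑ y, w y * g y := by
  have h : ∀ x : Fin n → X, (∏ k, w (x k)) * g (x j) =
      ∏ k, (w (x k) * if k = j then g (x k) else 1) := by
    intro x
    rw [Finset.prod_mul_distrib, Finset.prod_ite_eq' Finset.univ j (fun k => g (x k))]
    simp
  simp_rw [h]
  rw [← Fintype.prod_sum (fun k (y : X) => w y * if k = j then g y else 1)]
  rw [Finset.prod_eq_single j]
  · simp
  · intro k _ hk
    simp [hk, h1]
  · simp

/-- The polynomial number of traces on `2n` points is beaten by the exponential tail; this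
fixes the sample size in terms of `d` and `δ` alone. -/
lemma exists_sample_size (d : ℕ) {δ : ℝ} (hδ : 0 < δ) :
    ∃ n : ℕ, 0 < n ∧ 4 * (2 * (n : ℝ) + 1) ^ d * Real.exp (-(δ ^ 2 * n / 8)) ≤ δ := by
  have h := Real.tendsto_pow_mul_exp_neg_atTop_nhds_zero d
  have hc : 0 < δ ^ 2 / 16 := by positivity
  have hu : Tendsto (fun n : ℕ => δ ^ 2 / 16 * (2 * (n : ℝ) + 1)) atTop atTop := by
    refine Tendsto.const_mul_atTop hc ?_
    refine tendsto_atTop_add_const_right _ _ ?_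
    exact Tendsto.const_mul_atTop two_pos tendsto_natCast_atTop_atTop
  have h2 := (h.comp hu).const_mul (4 * ((δ ^ 2 / 16) ^ d)⁻¹ * Real.exp (δ ^ 2 / 16))
  rw [mul_zero] at h2
  have h3 := (h2.eventually (ge_mem_nhds hδ)).and (eventually_gt_atTop 0)
  obtain ⟨n, hn, hn0⟩ := h3.exists
  refine ⟨n, hn0, le_of_eq_of_le ?_ hn⟩
  simp only [Function.comp]
  have h4 : Real.exp (-(δ ^ 2 * n / 8)) =
      Real.exp (δ ^ 2 / 16) * Real.exp (-(δ ^ 2 / 16 * (2 * (n : ℝ) + 1))) := by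
    rw [← Real.exp_add]; congr 1; ring
  rw [h4, mul_pow]
  field_simp

/-- The exchange of the `j`-th points of the two samples `z.1`, `z.2` for every `j` with
`σ j = true`. -/
def swapPair {X : Type*} {n : ℕ} (σ : Fin n → Bool) (z : (Fin n → X) × (Fin n → X)) :
    (Fin n → X) × (Fin n → X) :=
  (fun j => bif σ j then z.2 j else z.1 j, fun j => bif σ j then z.1 j else z.2 j)

lemma swapPair_involutive {X : Type*} {n : ℕ} (σ : Fin n → Bool) :
    Function.Involutive (swapPair (X := X) σ) := by
  intro z
  ext j <;> simp only [swapPair] <;> cases σ j <;> rfl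

/-- A bounded quantity is at most `δ` plus an exponentially small multiple of its exponential
moments (Markov's inequality in pointwise form). -/
lemma abs_le_exp_bound {Z δ t N C : ℝ} (ht : 0 ≤ t) (hN : 0 ≤ N) (hC : |Z| ≤ C) (hδ : 0 ≤ δ) :
    |Z| ≤ δ + C * Real.exp (-(t * N * δ)) *
      (Real.exp (t * (N * Z)) + Real.exp (-t * (N * Z))) := by
  have hC0 : 0 ≤ C := (abs_nonneg _).trans hC
  rcases le_total |Z| δ with h | h
  · have : 0 ≤ C * Real.exp (-(t * N * δ)) *
      (Real.exp (t * (N * Z)) + Real.exp (-t * (N * Z))) := by positivity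
    linarith
  · have h1 : Real.exp (t * N * δ) ≤ Real.exp (t * (N * Z)) + Real.exp (-t * (N * Z)) := by
      have hm : t * N * δ ≤ t * N * |Z| := by gcongr
      rcases abs_cases Z with ⟨hz, _⟩ | ⟨hz, _⟩
      · have : Real.exp (t * N * δ) ≤ Real.exp (t * (N * Z)) := by
          rw [Real.exp_le_exp]; rw [hz] at hm; linarith
        have := Real.exp_pos (-t * (N * Z)); linarith
      · have : Real.exp (t * N * δ) ≤ Real.exp (-t * (N * Z)) := by
          rw [Real.exp_le_exp]; rw [hz] at hm; linarith
        have := Real.exp_pos (t * (N * Z)); linarith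
    have h2 : 1 ≤ Real.exp (-(t * N * δ)) *
      (Real.exp (t * (N * Z)) + Real.exp (-t * (N * Z))) := by
      calc (1:ℝ) = Real.exp (-(t * N * δ)) * Real.exp (t * N * δ) := by
            rw [← Real.exp_add]; simp
        _ ≤ _ := by gcongr
    nlinarith

/-- The Vapnik–Chervonenkis uniform law for finitely supported measures: if the functions `f i`
are bounded by `1` and have polynomially many traces on finite families of points, then every
probability weight `w` is uniformly `ε`-approximated on all `f i` by the average over `n` points,
with `n` depending only on `d` and `ε`. The proof is symmetrisation: the expected discrepancy
of a random sample from `w` is at most that between two independent samples, which is invariant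
under random exchanges of the two, and these are controlled by `sum_signs_exp` and a union bound
over the traces. -/
theorem vc_approx (d : ℕ) {ε : ℝ} (hε : 0 < ε) :
    ∃ n : ℕ, 0 < n ∧ ∀ (X : Type) [Fintype X] (ι : Type) [Nonempty ι] (f : ι → X → ℝ)
      (w : X → ℝ), (∀ i x, |f i x| ≤ 1) →
      (∀ (J : Type) [Fintype J] (x : J → X), ∃ F : Finset (J → ℝ),
        F.card ≤ (Fintype.card J + 1) ^ d ∧ ∀ i, (fun j => f i (x j)) ∈ F) →
      (∀ x, 0 ≤ w x) → ∑ x, w x = 1 →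
      ∃ x : Fin n → X, ∀ i, |(∑ j, f i (x j)) / n - ∑ y, w y * f i y| ≤ ε := by
  obtain ⟨n, hn, hbd⟩ := exists_sample_size d (δ := ε / 4) (by positivity)
  have hn' : (0:ℝ) < n := by exact_mod_cast hn
  refine ⟨n, hn, ?_⟩
  intro X _ ι _ f w hf hgr hw h1
  by_contra! hcon
  set W : (Fin n → X) → ℝ := fun x => ∏ j, w (x j) with hW
  have hW0 : ∀ x, 0 ≤ W x := fun x => Finset.prod_nonneg fun j _ => hw _
  have hW1 : ∑ x, W x = 1 := sum_weights w h1
  let Z : ι → (Fin n → X) × (Fin n → X) → ℝ := fun i z =>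
    (∑ j, (f i (z.1 j) - f i (z.2 j))) / n
  have hZ2 : ∀ i z, |Z i z| ≤ 2 := by
    intro i z
    simp only [Z]
    rw [abs_div, abs_of_pos hn', div_le_iff₀ hn']
    calc |∑ j, (f i (z.1 j) - f i (z.2 j))| ≤ ∑ j : Fin n, (2:ℝ) := by
          refine (Finset.abs_sum_le_sum_abs _ _).trans (Finset.sum_le_sum fun j _ => ?_)
          have := abs_sub (f i (z.1 j)) (f i (z.2 j))
          linarith [hf i (z.1 j), hf i (z.2 j)]
      _ = 2 * n := by simp [mul_comm]
  let S : (Fin n → X) × (Fin n → X) → ℝ := fun z => ⨆ i, |Z i z|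
  have hSb : ∀ z, BddAbove (range fun i => |Z i z|) := fun z =>
    ⟨2, by rintro _ ⟨i, rfl⟩; exact hZ2 i z⟩
  have hS : ∀ i z, |Z i z| ≤ S z := fun i z => le_ciSup (hSb z) i
  -- `w`-averages are averages over a second, independent sample.
  have step1 : ε ≤ ∑ z : (Fin n → X) × (Fin n → X), W z.1 * W z.2 * S z := by
    rw [Fintype.sum_prod_type]
    calc ε = ∑ x, W x * ε := by rw [← Finset.sum_mul, hW1, one_mul]
      _ ≤ _ := by
        refine Finset.sum_le_sum fun x _ => ?_
        simp_rw [mul_assoc]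
        rw [← Finset.mul_sum]
        refine mul_le_mul_of_nonneg_left ?_ (hW0 x)
        obtain ⟨i, hi⟩ := hcon x
        refine hi.le.trans ?_
        have key : (∑ j, f i (x j)) / n - ∑ y, w y * f i y = ∑ x', W x' * Z i (x, x') := by
          have e1 : ∑ x', W x' * Z i (x, x') =
              ∑ x', (W x' * ((∑ j, f i (x j)) / n) - (∑ j, W x' * f i (x' j)) / n) := by
            refine Finset.sum_congr rfl fun x' _ => ?_
            simp only [Z, Finset.sum_sub_distrib, ← Finset.mul_sum]
            ring
          rw [e1, Finset.sum_sub_distrib, ← Finset.sum_mul, hW1, ← Finset.sum_div,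
            Finset.sum_comm]
          simp_rw [hW, sum_weights_marginal w h1 (f i)]
          simp only [Finset.sum_const, Finset.card_univ, Fintype.card_fin, nsmul_eq_mul]
          field_simp
        rw [key]
        refine (Finset.abs_sum_le_sum_abs _ _).trans (Finset.sum_le_sum fun x' _ => ?_)
        rw [abs_mul, abs_of_nonneg (hW0 x')]
        exact mul_le_mul_of_nonneg_left (hS i _) (hW0 x')
  have step2 : ∀ σ : Fin n → Bool, ∑ z : (Fin n → X) × (Fin n → X), W z.1 * W z.2 * S z =
      ∑ z : (Fin n → X) × (Fin n → X), W z.1 * W z.2 * S (swapPair σ z) := by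
    intro σ
    -- The product weight is invariant under exchanging the two samples along `σ`.
    rw [← Equiv.sum_comp (swapPair_involutive (X := X) σ).toPerm]
    refine Finset.sum_congr rfl fun z _ => ?_
    simp only [Function.Involutive.coe_toPerm]
    congr 1
    simp only [hW, ← Finset.prod_mul_distrib, swapPair]
    refine Finset.prod_congr rfl fun j _ => ?_
    cases σ j <;> simp [mul_comm]
  -- With the pair of samples fixed, only the traces on its `2n` points matter.
  have step3 : ∀ z : (Fin n → X) × (Fin n → X),
      ∑ σ : Fin n → Bool, S (swapPair σ z) ≤ 2 ^ n * (ε / 2) := by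
    intro z
    classical
    obtain ⟨F, hFc, hF⟩ := hgr (Fin n ⊕ Fin n) (Sum.elim z.1 z.2)
    let F' := F.filter fun g => ∀ j, |g j| ≤ 1
    have hF' : ∀ i, (fun j => f i (Sum.elim z.1 z.2 j)) ∈ F' := fun i =>
      Finset.mem_filter.2 ⟨hF i, fun j => hf i _⟩
    have hF'c : (F'.card : ℝ) ≤ (2 * n + 1) ^ d := by
      have : F'.card ≤ (2 * n + 1) ^ d := by
        refine (Finset.card_filter_le _ _).trans (hFc.trans (le_of_eq ?_))
        simp [two_mul]
      exact_mod_cast this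
    let δ := ε / 4
    -- `δ / 4` minimises the exponent `-tδ + 2t²` produced by `sum_signs_exp`.
    let t := δ / 4
    have hδ : 0 < δ := by positivity
    have ht : 0 < t := by positivity
    let E : (Fin n ⊕ Fin n → ℝ) → ℝ → (Fin n → Bool) → ℝ := fun g t σ =>
      Real.exp (t * ∑ j, (bif σ j then -1 else 1) * (g (Sum.inl j) - g (Sum.inr j)))
    have hpt : ∀ σ : Fin n → Bool, S (swapPair σ z) ≤
        δ + 2 * Real.exp (-(t * n * δ)) * ∑ g ∈ F', (E g t σ + E g (-t) σ) := by
      intro σ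
      refine ciSup_le fun i => ?_
      refine (abs_le_exp_bound ht.le hn'.le (hZ2 i _) hδ.le).trans ?_
      gcongr
      have hz : (n:ℝ) * Z i (swapPair σ z) = ∑ j, (bif σ j then -1 else 1) *
          (f i (z.1 j) - f i (z.2 j)) := by
        simp only [Z]
        rw [mul_div_cancel₀ _ hn'.ne']
        refine Finset.sum_congr rfl fun j _ => ?_
        simp only [swapPair]
        cases σ j <;> simp
      rw [hz]
      exact Finset.single_le_sum (f := fun g => E g t σ + E g (-t) σ)
        (fun g _ => by positivity) (hF' i)
    have hE : ∀ g ∈ F', ∀ t, ∑ σ, E g t σ ≤ 2 ^ n * Real.exp (2 * t ^ 2 * n) := by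
      intro g hg t
      refine sum_signs_exp _ _ fun j => ?_
      have hg' := (Finset.mem_filter.1 hg).2
      have := abs_sub (g (Sum.inl j)) (g (Sum.inr j))
      linarith [hg' (Sum.inl j), hg' (Sum.inr j)]
    calc ∑ σ : Fin n → Bool, S (swapPair σ z)
        ≤ ∑ σ : Fin n → Bool, (δ + 2 * Real.exp (-(t * n * δ)) *
            ∑ g ∈ F', (E g t σ + E g (-t) σ)) := Finset.sum_le_sum fun σ _ => hpt σ
      _ = 2 ^ n * δ + 2 * Real.exp (-(t * n * δ)) *
            ∑ g ∈ F', (∑ σ, E g t σ + ∑ σ, E g (-t) σ) := by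
          rw [Finset.sum_add_distrib, ← Finset.mul_sum, Finset.sum_comm]
          simp [Finset.sum_add_distrib]
      _ ≤ 2 ^ n * δ + 2 * Real.exp (-(t * n * δ)) *
            ∑ g ∈ F', (2 * (2 ^ n * Real.exp (2 * t ^ 2 * n))) := by
          gcongr with g hg
          have a := hE g hg t
          have b := hE g hg (-t)
          rw [neg_sq] at b
          linarith
      _ = 2 ^ n * (δ + 4 * F'.card * Real.exp (-(δ ^ 2 * n / 8))) := by
          have : Real.exp (-(δ ^ 2 * n / 8)) =
              Real.exp (-(t * n * δ)) * Real.exp (2 * t ^ 2 * n) := by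
            rw [← Real.exp_add]; congr 1; simp only [t]; ring
          rw [this, Finset.sum_const, nsmul_eq_mul]
          ring
      _ ≤ 2 ^ n * (δ + δ) := by
          gcongr
          refine le_trans ?_ hbd
          gcongr
      _ = _ := by simp only [δ]; ring
  have step4 : (2:ℝ) ^ n * ε ≤ 2 ^ n * (ε / 2) := by
    calc (2:ℝ) ^ n * ε ≤ ∑ σ : Fin n → Bool,
          ∑ z : (Fin n → X) × (Fin n → X), W z.1 * W z.2 * S (swapPair σ z) := by
          have : (2:ℝ) ^ n * ε = ∑ σ : Fin n → Bool, ε := by simp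
          rw [this]
          exact Finset.sum_le_sum fun σ _ => step1.trans (step2 σ).le
      _ = ∑ z : (Fin n → X) × (Fin n → X), W z.1 * W z.2 *
            ∑ σ : Fin n → Bool, S (swapPair σ z) := by
          rw [Finset.sum_comm]
          simp_rw [Finset.mul_sum]
      _ ≤ ∑ z : (Fin n → X) × (Fin n → X), W z.1 * W z.2 * (2 ^ n * (ε / 2)) := by
          refine Finset.sum_le_sum fun z _ => ?_
          exact mul_le_mul_of_nonneg_left (step3 z) (mul_nonneg (hW0 _) (hW0 _))
      _ = _ := by
          rw [← Finset.sum_mul, Fintype.sum_prod_type]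
          simp_rw [← Finset.mul_sum, hW1]
          simp [hW1]
  have : (0:ℝ) < 2 ^ n := by positivity
  nlinarith

/-! ### Shatter bounds and the Sauer–Shelah lemma -/

/-- No set of at least `d` points of `X` is shattered by the sets `{x | R x y}`, `y ∈ Y`; that is,
the Vapnik–Chervonenkis dimension of this family is less than `d`. -/
def ShatterBound {X Y : Type*} (R : X → Y → Prop) (d : ℕ) : Prop :=
  ∀ A : Finset X, d ≤ A.card → ¬ ∀ K ⊆ A, ∃ y, ∀ c ∈ A, (R c y ↔ c ∈ K)

/-- If `2 ^ d` points `y_T`, `T ⊆ d`, are shattered by the sets `{y | R x y}`, then choosing `x_j`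
with `R x_j y_T ↔ j ∈ T` gives `d` shattered points of `X`. -/
lemma ShatterBound.dual {X Y : Type*} {R : X → Y → Prop} {d : ℕ} (h : ShatterBound R d) :
    ShatterBound (fun y x => R x y) (2 ^ d) := by
  classical
  intro B hB hsh
  obtain ⟨B', hB'B, hB'c⟩ := Finset.exists_subset_card_eq hB
  have hc : Fintype.card (Finset (Fin d)) = Fintype.card B' := by simp [hB'c]
  let e := Fintype.equivOfCardEq hc
  have heB : ∀ T, (e T : Y) ∈ B := fun T => hB'B (e T).2
  have hinj : ∀ T T', (e T : Y) = e T' → T = T' := fun T T' h => e.injective (Subtype.ext h)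
  have hK : ∀ j : Fin d, ∃ x, ∀ T : Finset (Fin d), (R x (e T) ↔ j ∈ T) := by
    intro j
    obtain ⟨x, hx⟩ := hsh ((Finset.univ.filter fun T : Finset (Fin d) => j ∈ T).image
      fun T => (e T : Y)) (by
        intro y hy
        obtain ⟨T, _, rfl⟩ := Finset.mem_image.1 hy
        exact heB T)
    refine ⟨x, fun T => ?_⟩
    refine (hx _ (heB T)).trans ?_
    constructor
    · intro hm
      obtain ⟨T', hT', he⟩ := Finset.mem_image.1 hm
      rw [← hinj _ _ he]
      simpa using hT'
    · intro hj
      exact Finset.mem_image.2 ⟨T, by simpa using hj, rfl⟩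
  choose a ha using hK
  have hainj : Function.Injective a := by
    intro j j' hjj
    have h1 := (ha j {j}).2 (by simp)
    rw [hjj, ha j' {j}] at h1
    exact (Finset.mem_singleton.1 h1).symm
  refine h (Finset.univ.image a) (by rw [Finset.card_image_of_injective _ hainj]; simp) ?_
  intro K _
  refine ⟨e (Finset.univ.filter fun j => a j ∈ K), fun c hc => ?_⟩
  obtain ⟨j, _, rfl⟩ := Finset.mem_image.1 hc
  rw [ha]
  simp

lemma sum_choose_le (m d : ℕ) : ∑ k ∈ Finset.range (d + 1), m.choose k ≤ (m + 1) ^ d := by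
  rw [add_pow]
  refine Finset.sum_le_sum fun k hk => ?_
  have hk' : k ≤ d := Nat.lt_succ_iff.1 (Finset.mem_range.1 hk)
  have h1 := Nat.choose_le_pow m k
  have h2 := Nat.choose_pos hk'
  simp only [one_pow, mul_one]
  calc m.choose k ≤ m ^ k := h1
    _ ≤ _ := by simpa using Nat.le_mul_of_pos_right (m ^ k) h2

/-- Sauer–Shelah: the sets `{x | R x y}` have at most `(|J| + 1) ^ d` traces on a finite family
`x : J → X`, repetitions being allowed. -/
lemma ShatterBound.traces {X Y : Type*} {R : X → Y → Prop} {d : ℕ} (h : ShatterBound R d)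
    (J : Type*) [Fintype J] (x : J → X) :
    ∃ F : Finset (Set J), F.card ≤ (Fintype.card J + 1) ^ d ∧ ∀ y, {j | R (x j) y} ∈ F := by
  classical
  let tr : Y → Finset J := fun y => Finset.univ.filter fun j => R (x j) y
  let 𝒜 : Finset (Finset J) := Finset.univ.filter fun T => ∃ y, tr y = T
  have hmem : ∀ y, tr y ∈ 𝒜 := fun y => by simp [𝒜]
  have hvc : 𝒜.vcDim ≤ d := by
    refine Finset.sup_le fun K hK => ?_
    rw [Finset.mem_shatterer] at hK
    by_contra! hd
    -- Repeated points cannot be separated, so `x` is injective on a shattered set.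
    have hinj : Set.InjOn x K := by
      intro a ha b hb hab
      obtain ⟨T, hT, hTa⟩ := hK.exists_inter_eq_singleton ha
      obtain ⟨y, rfl⟩ := (Finset.mem_filter.1 hT).2
      have h1 : a ∈ K ∩ tr y := by rw [hTa]; simp
      have h2 : b ∈ K ∩ tr y := by
        simp only [tr, Finset.mem_inter, Finset.mem_filter, Finset.mem_univ, true_and] at h1 ⊢
        exact ⟨hb, hab ▸ h1.2⟩
      rw [hTa] at h2
      exact (Finset.mem_singleton.1 h2).symm
    refine h (K.image x) (by rw [Finset.card_image_of_injOn hinj]; exact hd.le) ?_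
    intro K' _
    obtain ⟨T, hT, hTK⟩ := hK (Finset.filter_subset (fun j => x j ∈ K') K)
    obtain ⟨y, rfl⟩ := (Finset.mem_filter.1 hT).2
    refine ⟨y, fun c hc => ?_⟩
    obtain ⟨j, hj, rfl⟩ := Finset.mem_image.1 hc
    have := Finset.ext_iff.1 hTK j
    simpa [tr, hj] using this
  refine ⟨𝒜.image fun T : Finset J => (T : Set J), ?_, fun y => ?_⟩
  · refine Finset.card_image_le.trans ?_
    refine (Finset.card_le_card_shatterer 𝒜).trans ?_
    refine Finset.card_shatterer_le_sum_vcDim.trans ?_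
    refine le_trans ?_ (sum_choose_le (Fintype.card J) d)
    rw [← Nat.range_succ_eq_Iic]
    exact Finset.sum_le_sum_of_subset (Finset.range_mono (by omega))
  · refine Finset.mem_image.2 ⟨tr y, hmem y, ?_⟩
    ext j
    simp [tr]

/-! ### A minimax theorem with finitely many rows -/

/-- The minimax theorem for a game with finitely many rows `A` and arbitrary columns `C`: either
some mixed row strategy keeps the payoff at most `ε` against every column, or some finitely
supported mixed column strategy exceeds `ε` against every row. The row strategy is a normalised
functional separating the orthant `{u | ∀ a, ε < u a}` from the convex hull of the columns. -/
lemma minimax_alternative {A : Type} [Fintype A] [Nonempty A] {C : Type} (v : C → A → ℝ) (ε : ℝ) :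
    (∃ w : A → ℝ, (∀ a, 0 ≤ w a) ∧ ∑ a, w a = 1 ∧ ∀ c, ∑ a, w a * v c a ≤ ε) ∨
    (∃ (I : Type) (_ : Fintype I) (η : I → ℝ) (c : I → C), (∀ i, 0 ≤ η i) ∧ ∑ i, η i = 1 ∧
      ∀ a, ε < ∑ i, η i * v (c i) a) := by
  classical
  by_cases hd : Disjoint {u : A → ℝ | ∀ a, ε < u a} (convexHull ℝ (range v))
  · left
    have hconv : Convex ℝ {u : A → ℝ | ∀ a, ε < u a} := by
      have : {u : A → ℝ | ∀ a, ε < u a} = Set.pi univ fun _ => Ioi ε := by ext; simp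
      rw [this]
      exact convex_pi fun _ _ => convex_Ioi ε
    have hopen : IsOpen {u : A → ℝ | ∀ a, ε < u a} := by
      have : {u : A → ℝ | ∀ a, ε < u a} = Set.pi univ fun _ => Ioi ε := by ext; simp
      rw [this]
      exact isOpen_set_pi finite_univ fun _ _ => isOpen_Ioi
    rcases isEmpty_or_nonempty C with hC | hC
    · refine ⟨fun _ => (Fintype.card A : ℝ)⁻¹, fun _ => by positivity, ?_, fun c => hC.elim c⟩
      simp
    obtain ⟨g, s, hg1, hg2⟩ := geometric_hahn_banach_open hconv hopen (convex_convexHull ℝ _) hd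
    let q : A → ℝ := fun a => - g (Pi.single a 1)
    have hgq : ∀ u : A → ℝ, g u = - ∑ a, q a * u a := by
      intro u
      have h := g.toLinearMap.pi_apply_eq_sum_univ u
      simp only [ContinuousLinearMap.coe_coe] at h
      rw [h, ← Finset.sum_neg_distrib]
      refine Finset.sum_congr rfl fun a _ => ?_
      have : (fun j => if a = j then (1:ℝ) else 0) = Pi.single a 1 := by
        ext j; simp [Pi.single_apply, eq_comm]
      rw [this]
      simp only [q, smul_eq_mul]; ring
    have hq : ∀ a, 0 ≤ q a := by
      intro a
      by_contra! hneg
      -- Raising the coordinate `a` by a large `K` stays in the orthant, where `g < s`.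
      let S := ∑ a, q a * (ε + 1)
      let K : ℝ := max 0 ((s + S) / (- q a))
      have h1 := hg1 (fun b => (ε + 1) + if b = a then K else 0) (by
        intro b
        have : 0 ≤ K := le_max_left _ _
        dsimp only
        split_ifs <;> linarith)
      rw [hgq] at h1
      simp only [mul_add, Finset.sum_add_distrib, mul_ite, mul_zero, Finset.sum_ite_eq',
        Finset.mem_univ, if_true] at h1
      have hK : (s + S) / (- q a) ≤ K := le_max_right _ _
      rw [div_le_iff₀ (by linarith)] at hK
      simp only [S, mul_add, Finset.sum_add_distrib] at hK
      linarith
    have hQ : 0 < ∑ a, q a := by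
      refine lt_of_le_of_ne (Finset.sum_nonneg fun a _ => hq a) fun h0 => ?_
      have hz : ∀ a, q a = 0 := fun a =>
        (Finset.sum_eq_zero_iff_of_nonneg (fun a _ => hq a)).1 h0.symm a (Finset.mem_univ a)
      obtain ⟨c⟩ := hC
      have h1 := hg1 (fun _ => ε + 1) (fun _ => by simp)
      have h2 := hg2 (v c) (subset_convexHull ℝ _ (mem_range_self c))
      rw [hgq] at h1 h2
      simp [hz] at h1 h2
      linarith
    refine ⟨fun a => q a / ∑ a, q a, fun a => div_nonneg (hq a) hQ.le, ?_, fun c => ?_⟩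
    · rw [← Finset.sum_div, div_self hQ.ne']
    · have h2 := hg2 (v c) (subset_convexHull ℝ _ (mem_range_self c))
      rw [hgq] at h2
      have h3 : ∀ τ > 0, ∑ a, q a * v c a ≤ (∑ a, q a) * (ε + τ) := by
        intro τ hτ
        have h1 := hg1 (fun _ => ε + τ) (fun _ => by simpa using hτ)
        rw [hgq, ← Finset.sum_mul] at h1
        linarith
      have h4 : ∑ a, q a * v c a ≤ (∑ a, q a) * ε := by
        refine le_of_forall_pos_le_add fun τ hτ => ?_
        have := h3 (τ / ∑ a, q a) (by positivity)
        rw [mul_add, mul_div_cancel₀ _ hQ.ne'] at this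
        exact this
      simp_rw [div_mul_eq_mul_div]
      rw [← Finset.sum_div, div_le_iff₀ hQ]
      linarith
  · right
    rw [Set.not_disjoint_iff] at hd
    obtain ⟨u, hu, huc⟩ := hd
    obtain ⟨I, _, η, z, h0, h1, hz, hs⟩ := mem_convexHull_iff_exists_fintype.1 huc
    choose c hc using hz
    refine ⟨I, inferInstance, η, c, h0, h1, fun a => ?_⟩
    have := hu a
    rw [← hs] at this
    simpa [hc] using this

/-! ### Local Keisler measures -/

section Measure

variable {U : Type} [L.Structure U] {nx ny : ℕ} {φ : L.Formula (Fin nx ⊕ Fin ny)}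

lemma InPhiAlg.finset_inter {ι : Type*} (s : Finset ι) (E : ι → Set (Fin nx → U))
    (hE : ∀ i, InPhiAlg φ (E i)) : InPhiAlg φ {x | ∀ i ∈ s, x ∈ E i} := by
  classical
  induction s using Finset.induction_on with
  | empty => simpa using InPhiAlg.univ
  | insert a s _ ih =>
    have : {x | ∀ i ∈ insert a s, x ∈ E i} = E a ∩ {x | ∀ i ∈ s, x ∈ E i} := by
      ext x; simp
    rw [this]
    exact (hE a).inter ih

lemma InPhiAlg.finset_union {ι : Type*} (s : Finset ι) (E : ι → Set (Fin nx → U))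
    (hE : ∀ i, InPhiAlg φ (E i)) : InPhiAlg φ {x | ∃ i ∈ s, x ∈ E i} := by
  classical
  induction s using Finset.induction_on with
  | empty => simpa using InPhiAlg.empty
  | insert a s _ ih =>
    have : {x | ∃ i ∈ insert a s, x ∈ E i} = E a ∪ {x | ∃ i ∈ s, x ∈ E i} := by
      ext x; simp
    rw [this]
    exact (hE a).union ih

namespace KeislerMeasure

variable (μ : KeislerMeasure U φ)

lemma toFun_empty : μ.toFun ∅ = 0 := by
  have h := μ.additive ∅ ∅ .empty .empty (disjoint_bot_left)
  rw [union_self] at h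
  linarith

lemma toFun_le_one {s : Set (Fin nx → U)} (hs : InPhiAlg φ s) : μ.toFun s ≤ 1 := by
  have h := μ.additive s sᶜ hs hs.compl disjoint_compl_right
  rw [union_compl_self, μ.total] at h
  linarith [μ.nonneg _ hs.compl]

lemma toFun_finset_union {ι : Type*} (s : Finset ι) (E : ι → Set (Fin nx → U))
    (hE : ∀ i, InPhiAlg φ (E i)) (hd : ∀ i j, i ≠ j → Disjoint (E i) (E j)) :
    μ.toFun {x | ∃ i ∈ s, x ∈ E i} = ∑ i ∈ s, μ.toFun (E i) := by
  classical
  induction s using Finset.induction_on with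
  | empty => simpa using μ.toFun_empty
  | insert a s ha ih =>
    have : {x | ∃ i ∈ insert a s, x ∈ E i} = E a ∪ {x | ∃ i ∈ s, x ∈ E i} := by
      ext x; simp
    rw [this, μ.additive _ _ (hE a) (InPhiAlg.finset_union s E hE), Finset.sum_insert ha, ih]
    rw [Set.disjoint_left]
    rintro x hx ⟨i, hi, hxi⟩
    exact Set.disjoint_left.1 (hd a i (by rintro rfl; exact ha hi)) hx hxi

/-- A combination `∑ s_j (φ(x;b_j) - μ(φ(x;b_j)))` has `μ`-mean zero, so by finite
satisfiability it is nonpositive at some point of `M`: each atom of positive measure of the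
algebra generated by the `φ(x;b_j)` has a point in `M`. -/
lemma exists_nonpos (M : L.ElementarySubstructure U) (hfs : FinSat φ M μ) {n : ℕ}
    (b : Fin n → Fin ny → U) (s : Fin n → ℝ) :
    ∃ a : Fin nx → M, ∑ j, s j * ((phiSet φ (b j)).indicator (fun _ => (1 : ℝ))
      (fun i => (a i : U)) - μ.toFun (phiSet φ (b j))) ≤ 0 := by
  classical
  by_contra! hcon
  let atom : Finset (Fin n) → Set (Fin nx → U) := fun T =>
    {x | ∀ j ∈ (Finset.univ : Finset (Fin n)),
      x ∈ if j ∈ T then phiSet φ (b j) else (phiSet φ (b j))ᶜ}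
  have hatom : ∀ T, InPhiAlg φ (atom T) := fun T => InPhiAlg.finset_inter _ _ fun j => by
    split_ifs
    · exact .basic _
    · exact (InPhiAlg.basic _).compl
  have hmem : ∀ T x, x ∈ atom T ↔ T = Finset.univ.filter fun j => x ∈ phiSet φ (b j) := by
    intro T x
    simp only [atom, Finset.mem_univ, true_implies, mem_ofPred_eq, Finset.ext_iff,
      Finset.mem_filter, true_and]
    refine forall_congr' fun j => ?_
    split_ifs with h <;> simp [h]
  have hdisj : ∀ T T', T ≠ T' → Disjoint (atom T) (atom T') := by
    intro T T' hne
    rw [Set.disjoint_left]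
    intro x hx hx'
    exact hne (((hmem T x).1 hx).trans ((hmem T' x).1 hx').symm)
  have htot : ∑ T, μ.toFun (atom T) = 1 := by
    rw [← μ.toFun_finset_union Finset.univ atom hatom hdisj, ← μ.total]
    congr 1
    ext x
    simp [hmem]
  have hj : ∀ j, μ.toFun (phiSet φ (b j)) =
      ∑ T : Finset (Fin n), μ.toFun (atom T) * if j ∈ T then 1 else 0 := by
    intro j
    simp only [mul_ite, mul_one, mul_zero]
    rw [← Finset.sum_filter, ← μ.toFun_finset_union _ atom hatom hdisj]
    congr 1
    ext x
    simp [hmem]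
  let g : Finset (Fin n) → ℝ := fun T =>
    ∑ j, s j * ((if j ∈ T then 1 else 0) - μ.toFun (phiSet φ (b j)))
  have hg0 : ∑ T, μ.toFun (atom T) * g T = 0 := by
    simp only [g, Finset.mul_sum]
    rw [Finset.sum_comm]
    refine Finset.sum_eq_zero fun j _ => ?_
    have : ∀ T : Finset (Fin n), μ.toFun (atom T) * (s j * ((if j ∈ T then 1 else 0) -
        μ.toFun (phiSet φ (b j)))) = s j * (μ.toFun (atom T) * (if j ∈ T then 1 else 0)) -
        s j * μ.toFun (phiSet φ (b j)) * μ.toFun (atom T) := fun T => by ring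
    simp_rw [this]
    rw [Finset.sum_sub_distrib, ← Finset.mul_sum, ← Finset.mul_sum, htot, ← hj j]
    ring
  have hpos : ∀ T, 0 < μ.toFun (atom T) → 0 < g T := by
    intro T hT
    obtain ⟨a, ha⟩ := hfs _ (hatom T) hT
    refine lt_of_lt_of_eq (hcon a) ?_
    have hT' := (hmem _ _).1 ha
    refine Finset.sum_congr rfl fun j _ => ?_
    rw [hT', Set.indicator_apply]
    simp
  have hex : ∃ T, 0 < μ.toFun (atom T) := by
    by_contra! hle
    have := Finset.sum_nonpos fun T (_ : T ∈ (Finset.univ : Finset (Finset (Fin n)))) => hle T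
    linarith
  obtain ⟨T, hT⟩ := hex
  have : 0 < ∑ T, μ.toFun (atom T) * g T := by
    refine Finset.sum_pos' (fun T _ => ?_) ⟨T, Finset.mem_univ _, mul_pos hT (hpos T hT)⟩
    rcases (μ.nonneg _ (hatom T)).eq_or_lt with h | h
    · rw [← h, zero_mul]
    · exact (mul_pos h (hpos T h)).le
  linarith

end KeislerMeasure

end Measure

/-! ### Saturation and definable sets -/

/-- Saturation for a family of sets definable over a small set `A`, with an arbitrary finite
index set for the variables. -/
lemma IsSaturated.exists_forall_mem {U : Type} [L.Structure U] {κ : Cardinal.{0}}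
    (hsat : IsSaturated L U κ) (A : Set U) (hA : #A < κ) {β : Type} [Finite β]
    {I : Type*} (D : I → Set (β → U)) (hD : ∀ i, A.Definable L (D i))
    (hfip : ∀ s : Finset I, ∃ v, ∀ i ∈ s, v ∈ D i) : ∃ v, ∀ i, v ∈ D i := by
  classical
  obtain ⟨k, ⟨e⟩⟩ := Finite.exists_equiv_fin β
  have hD' : ∀ i, ∃ ψ : L.Formula (Fin k ⊕ A), ∀ v : Fin k → U,
      ψ.Realize (Sum.elim v (fun a : A => (a : U))) ↔ v ∘ e ∈ D i := by
    intro i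
    obtain ⟨ψ, hψ⟩ := Set.definable_iff_exists_formula_sum.1 (hD i)
    refine ⟨ψ.relabel (Sum.elim Sum.inr (Sum.inl ∘ e)), fun v => ?_⟩
    rw [hψ, FirstOrder.Language.Formula.realize_relabel]
    refine iff_of_eq (congrArg _ ?_)
    ext (x | x) <;> rfl
  choose ψ hψ using hD'
  obtain ⟨v, hv⟩ := hsat A hA (fun a => a) k (Set.range ψ) (by
    intro s hs
    have : ∀ χ : s, ∃ i, ψ i = χ := fun χ => hs χ.2
    choose f hf using this
    obtain ⟨v, hv⟩ := hfip (Finset.univ.image f)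
    refine ⟨v ∘ e.symm, fun χ hχ => ?_⟩
    have h1 := hf ⟨χ, hχ⟩
    simp only at h1
    rw [← h1, hψ]
    have := hv (f ⟨χ, hχ⟩) (Finset.mem_image_of_mem _ (Finset.mem_univ _))
    simpa [Function.comp_assoc] using this)
  exact ⟨v ∘ e, fun i => (hψ i v).1 (hv _ (Set.mem_range_self i))⟩

/-- Any condition on which of finitely many definable sets a point lies in is definable. -/
lemma definable_boolean {U : Type} [L.Structure U] {A : Set U} {β : Type} {n : ℕ}
    (E : Fin n → Set (β → U)) (hE : ∀ j, A.Definable L (E j)) (P : Finset (Fin n) → Prop)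
    (tr : (β → U) → Finset (Fin n)) (htr : ∀ v j, j ∈ tr v ↔ v ∈ E j) :
    A.Definable L {v | P (tr v)} := by
  classical
  have h : {v | P (tr v)} = ⋃ T ∈ Finset.univ.filter P,
      ⋂ j ∈ (Finset.univ : Finset (Fin n)), (if j ∈ T then E j else (E j)ᶜ) := by
    ext v
    simp only [mem_ofPred_eq, mem_iUnion, mem_iInter, Finset.mem_filter, Finset.mem_univ,
      true_and, true_implies, exists_prop]
    have hv : ∀ T, (∀ j, v ∈ if j ∈ T then E j else (E j)ᶜ) ↔ T = tr v := by
      intro T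
      rw [Finset.ext_iff]
      refine forall_congr' fun j => ?_
      rw [htr]
      split_ifs with h <;> simp [h]
    simp [hv]
  rw [h]
  refine Set.definable_biUnion_finset (fun T => Set.definable_biInter_finset (fun j => ?_) _) _
  split_ifs
  · exact hE j
  · exact (hE j).compl

/-- If finitely many patterns suffice for every finite set, one pattern works for all of them. -/
lemma exists_uniform_pattern {I P : Type*} [Finite P] (Q : P → Finset I → Prop)
    (hmono : ∀ p s t, s ⊆ t → Q p t → Q p s) (h : ∀ s : Finset I, ∃ p, Q p s) :
    ∃ p, ∀ s, Q p s := by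
  classical
  by_contra! hcon
  choose s hs using hcon
  have := Fintype.ofFinite P
  obtain ⟨p, hp⟩ := h (Finset.univ.biUnion s)
  exact hs p (hmono _ _ _ (Finset.subset_biUnion_of_mem s (Finset.mem_univ p)) hp)

/-! ### Uniform approximation by averages -/

/-- **Lemma 4.16.** Let `φ(x;y)` be NIP. If `μ ∈ 𝔐_φ(U)` is generically stable over `M`,
then for every `ε > 0` there is a sequence `a_1, ..., a_n` in `M^x` such that
`|μ(φ(x;b)) - Av(ā)(φ(x;b))| < ε` for every `b ∈ U^y`. -/
theorem stmt_16
    {L : FirstOrder.Language.{0, 0}} (T : L.Theory) (hT : T.IsComplete)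
    (hL : L.card ≤ Cardinal.aleph0)
    {U : Type} [L.Structure U] [Nonempty U] (hUT : T.Model U)
    (κ : Cardinal.{0}) (hκ : Cardinal.aleph0 < κ) (hreg : κ.IsRegular)
    (hsat : IsSaturated L U κ) (hhom : IsStronglyHomogeneous L U κ)
    (M : L.ElementarySubstructure U) (hM : #M < κ)
    {nx ny : ℕ} (φ : L.Formula (Fin nx ⊕ Fin ny))    (hNIP : FormulaIsNIP U φ) (μ : KeislerMeasure U φ)
    (hgs : GenericallyStable φ M μ) :
    ∀ ε : ℝ, 0 < ε → ∃ n : ℕ, 0 < n ∧ ∃ a : Fin n → (Fin nx → M),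
      ∀ b : Fin ny → U,
        |μ.toFun (phiSet φ b) - Av (fun i => fun q => ((a i q : U))) (phiSet φ b)| < ε := by
  classical
  intro ε hε
  by_contra! hcon
  set F : (Fin ny → U) → ℝ := fun b => μ.toFun (phiSet φ b) with hF
  have hF0 : ∀ b, 0 ≤ F b := fun b => μ.nonneg _ (.basic b)
  have hF1 : ∀ b, F b ≤ 1 := fun b => μ.toFun_le_one (.basic b)
  let ind : (Fin nx → M) → (Fin ny → U) → ℝ := fun a b =>
    (phiSet φ b).indicator (fun _ => (1 : ℝ)) (fun i => (a i : U))
  have hind : ∀ a b, ind a b = if φ.Realize (Sum.elim (fun i => (a i : U)) b) then 1 else 0 :=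
    fun a b => Set.indicator_apply _ _ _
  have hind0 : ∀ a b, 0 ≤ ind a b := fun a b => by rw [hind]; split_ifs <;> norm_num
  have hind1 : ∀ a b, ind a b ≤ 1 := fun a b => by rw [hind]; split_ifs <;> norm_num
  let sg : Bool → ℝ := fun s => bif s then -1 else 1
  have hsg : ∀ s, |sg s| ≤ 1 := fun s => by cases s <;> simp [sg]
  obtain ⟨d, hd⟩ : ∃ d, ShatterBound
      (fun (x : Fin nx → U) (y : Fin ny → U) => φ.Realize (Sum.elim x y)) d := by
    by_contra! h
    refine hNIP fun n => ?_
    have := h n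
    simp only [ShatterBound] at this
    push Not at this
    obtain ⟨A, hA, hK⟩ := this
    exact ⟨A, hA, hK⟩
  obtain ⟨n₁, hn₁, hvc₁⟩ := vc_approx d (ε := ε / 4) (by positivity)
  obtain ⟨n, hn, hvc⟩ := vc_approx (2 ^ d) (ε := ε / 4) (by positivity)
  have hn' : (0 : ℝ) < n := by exact_mod_cast hn
  obtain ⟨a₀, -⟩ := hgs.2 Set.univ .univ (by rw [μ.total]; norm_num)
  -- If no averages over `M` are `ε`-close to `μ`, minimax on finitely many rows `a ∈ s` and the law
  -- of large numbers on the side of `y` give signed instances separating `μ` from every `a ∈ s`.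
  -- The number `n` of instances does not depend on `s`.
  have claim : ∀ s : Finset (Fin nx → M), ∃ (b : Fin n → Fin ny → U) (σ : Fin n → Bool),
      ∀ a ∈ s, ε / 4 ≤ (∑ j, sg (σ j) * (ind a (b j) - F (b j))) / n := by
    intro s
    -- Adding `a₀` keeps the set of rows nonempty.
    let A := {a // a ∈ insert a₀ s}
    have : Nonempty A := ⟨⟨a₀, Finset.mem_insert_self _ _⟩⟩
    rcases minimax_alternative (A := A) (C := (Fin ny → U) × Bool)
      (fun c a => sg c.2 * (ind a c.1 - F c.1)) (ε / 2) with ⟨w, hw0, hw1, hw⟩ |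
        ⟨I, _, η, c, hη0, hη1, hη⟩
    · exfalso
      obtain ⟨x, hx⟩ := hvc₁ A (Fin ny → U) (fun b a => ind a b) w
        (fun b a => abs_le.2 ⟨by linarith [hind0 a b], hind1 a b⟩)
        (fun J _ x => by
          obtain ⟨T, hTc, hT⟩ := hd.traces J (fun j => fun i => ((x j : Fin nx → M) i : U))
          refine ⟨T.image fun S j => if j ∈ S then 1 else 0, Finset.card_image_le.trans hTc,
            fun b => Finset.mem_image.2 ⟨_, hT b, ?_⟩⟩
          ext j
          rw [hind]
          simp) hw0 hw1
      obtain ⟨b, hb⟩ := hcon n₁ hn₁ (fun i => x i)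
      have hAv : Av (fun i => fun q => (((x i : Fin nx → M) q : M) : U)) (phiSet φ b) =
          (∑ j, ind (x j) b) / n₁ := rfl
      rw [hAv] at hb
      have h1 := hw (b, false)
      have h2 := hw (b, true)
      have h3 : ∑ a, w a * (ind a b - F b) = ∑ a, w a * ind a b - F b := by
        simp only [mul_sub, Finset.sum_sub_distrib, ← Finset.sum_mul, hw1, one_mul]
      simp only [sg, cond_true, cond_false, one_mul, neg_mul, mul_neg,
        Finset.sum_neg_distrib, h3] at h1 h2
      have h4 := abs_le.1 (hx b)
      have h5 : |F b - (∑ j, ind (x j) b) / n₁| ≤ 3 * ε / 4 :=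
        abs_le.2 ⟨by linarith [h4.2], by linarith [h4.1]⟩
      linarith
    · obtain ⟨x, hx⟩ := hvc I A (fun a i => sg (c i).2 * (ind a (c i).1 - F (c i).1)) η
        (fun a i => by
          rw [abs_mul]
          refine mul_le_one₀ (hsg _) (abs_nonneg _) ?_
          exact abs_le.2 ⟨by linarith [hind0 a (c i).1, hF1 (c i).1],
            by linarith [hind1 a (c i).1, hF0 (c i).1]⟩)
        (fun J _ x => by
          obtain ⟨T, hTc, hT⟩ := hd.dual.traces J (fun j => (c (x j)).1)
          refine ⟨T.image fun S j => sg (c (x j)).2 * ((if j ∈ S then 1 else 0) - F (c (x j)).1),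
            Finset.card_image_le.trans hTc,
            fun a => Finset.mem_image.2 ⟨_, hT (fun i => ((a : Fin nx → M) i : U)), ?_⟩⟩
          ext j
          rw [hind]
          simp) hη0 hη1
      refine ⟨fun j => (c (x j)).1, fun j => (c (x j)).2, fun a ha => ?_⟩
      have h1 := hη ⟨a, Finset.mem_insert_of_mem ha⟩
      have h2 := (abs_le.1 (hx ⟨a, Finset.mem_insert_of_mem ha⟩)).1
      dsimp only at h1 h2 ⊢
      linarith
  -- Definability replaces `F` by its approximate value `r i` on each of finitely many
  -- `M`-definable pieces, so that the separation becomes a condition over `M`.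
  obtain ⟨m, k, ρ, cc, hpart, hvar⟩ := hgs.1 1 (fun bs => phiSet φ (bs 0)) (.inst 1 0)
    (ε / 16) (by positivity)
  let piece : Fin m → (Fin ny → U) → Prop := fun i b =>
    (ρ i).Realize (Sum.elim (fun q => b q.2) (fun t => (cc t : U)))
  have hr : ∀ i, ∃ r : ℝ, ∀ b, piece i b → |F b - r| ≤ ε / 16 := by
    intro i
    by_cases h : ∃ b, piece i b
    · obtain ⟨b, hb⟩ := h
      exact ⟨F b, fun b' hb' => (hvar i (fun _ => b') (fun _ => b) hb' hb).le⟩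
    · exact ⟨0, fun b hb => (h ⟨b, hb⟩).elim⟩
  choose r hr using hr
  have hdiff : ∀ (a : Fin nx → M) (b : Fin n → Fin ny → U) (p : Fin n → Bool × Fin m),
      (∀ j, piece (p j).2 (b j)) →
      |(∑ j, sg (p j).1 * (ind a (b j) - F (b j))) / n -
        (∑ j, sg (p j).1 * (ind a (b j) - r (p j).2)) / n| ≤ ε / 16 := by
    intro a b p hp
    rw [← sub_div, ← Finset.sum_sub_distrib, abs_div, abs_of_pos hn', div_le_iff₀ hn']
    calc _ ≤ ∑ j : Fin n, ε / 16 := by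
          refine (Finset.abs_sum_le_sum_abs _ _).trans (Finset.sum_le_sum fun j _ => ?_)
          rw [← mul_sub, abs_mul, sub_sub_sub_cancel_left, abs_sub_comm]
          exact (mul_le_of_le_one_left (abs_nonneg _) (hsg _)).trans (hr _ _ (hp j))
      _ = _ := by simp [mul_comm]
  -- The signs and the pieces of the `b_j` form a finite pattern, which can be fixed.
  obtain ⟨p, hp⟩ := exists_uniform_pattern
    (fun (p : Fin n → Bool × Fin m) (s : Finset (Fin nx → M)) =>
      ∃ v : Fin n × Fin ny → U, (∀ j, piece (p j).2 fun q => v (j, q)) ∧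
        ∀ a ∈ s, ε / 8 ≤ (∑ j, sg (p j).1 * (ind a (fun q => v (j, q)) - r (p j).2)) / n)
    (by
      rintro p s t hst ⟨v, hv1, hv2⟩
      exact ⟨v, hv1, fun a ha => hv2 a (hst ha)⟩)
    (by
      intro s
      obtain ⟨b, σ, hb⟩ := claim s
      choose i hi using fun j => (hpart fun _ => b j).exists
      refine ⟨fun j => (σ j, i j), fun q => b q.1 q.2, hi, fun a ha => ?_⟩
      have h1 := (abs_le.1 (hdiff a b (fun j => (σ j, i j)) hi)).2
      have h2 := hb a ha
      dsimp only at h1 ⊢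
      linarith)
  let D : Fin n ⊕ (Fin nx → M) → Set (Fin n × Fin ny → U) := Sum.elim
    (fun j => {v | piece (p j).2 fun q => v (j, q)})
    (fun a => {v | ε / 8 ≤ (∑ j, sg (p j).1 * (ind a (fun q => v (j, q)) - r (p j).2)) / n})
  -- Since `M` is small, one tuple of instances separates `μ` from all points of `M` at once.
  obtain ⟨v, hv⟩ := hsat.exists_forall_mem (M : Set U) hM D (by
    rintro (j | a)
    · refine Set.definable_iff_exists_formula_sum.2 ⟨(ρ (p j).2).relabel
        (Sum.elim (fun q => Sum.inr (j, q.2)) fun t => Sum.inl ⟨cc t, (cc t).2⟩), ?_⟩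
      ext v
      simp only [D, Sum.elim_inl, mem_ofPred_eq, FirstOrder.Language.Formula.realize_relabel, piece]
      refine iff_of_eq (congrArg _ ?_)
      ext (x | x) <;> rfl
    · let E : Fin n → Set (Fin n × Fin ny → U) := fun j =>
        {v | φ.Realize (Sum.elim (fun i => (a i : U)) fun q => v (j, q))}
      have hE : ∀ j, (M : Set U).Definable L (E j) := by
        intro j
        refine Set.definable_iff_exists_formula_sum.2 ⟨φ.relabel
          (Sum.elim (fun i => Sum.inl ⟨a i, (a i).2⟩) fun q => Sum.inr (j, q)), ?_⟩
        ext v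
        simp only [E, mem_ofPred_eq, FirstOrder.Language.Formula.realize_relabel]
        refine iff_of_eq (congrArg _ ?_)
        ext (x | x) <;> rfl
      convert definable_boolean E hE
        (fun T => ε / 8 ≤ (∑ j, sg (p j).1 * ((if j ∈ T then 1 else 0) - r (p j).2)) / n)
        (fun v => Finset.univ.filter fun j => v ∈ E j) (by simp) using 1
      ext v
      simp only [D, Sum.elim_inr, mem_ofPred_eq, hind, Finset.mem_filter, Finset.mem_univ,
        true_and, E])
    (by
      intro s
      obtain ⟨v, hv1, hv2⟩ := hp s.toRight
      refine ⟨v, ?_⟩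
      rintro (j | a) hs
      · exact hv1 j
      · exact hv2 a (Finset.mem_toRight.2 hs))
  obtain ⟨a, ha⟩ := μ.exists_nonpos M hgs.2 (fun j q => v (j, q)) (fun j => sg (p j).1)
  have h1 := (abs_le.1 (hdiff a (fun j q => v (j, q)) p fun j => hv (Sum.inl j))).1
  have h2 : ε / 8 ≤ (∑ j, sg (p j).1 * (ind a (fun q => v (j, q)) - r (p j).2)) / n :=
    hv (Sum.inr a)
  have h3 : (∑ j, sg (p j).1 * (ind a (fun q => v (j, q)) - F (fun q => v (j, q)))) / n ≤ 0 :=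
    div_nonpos_of_nonpos_of_nonneg ha hn'.le
  linarith
end
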